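/- arXiv:1304.7541 — 2 statements merged into one kernel-verified Lean document; each statement's English description precedes it below -/
import Mathlib

section
/- Suppose m ≥ 1 is an integer divisible by l(l−1). Then exactly m − m/(l−1) of the minimal generators of I^{(m)} have degree strictly greater than 2m; that is, Σ_{d > 2m} v_d(I^{(m)}) = m − m/(l−1). -/
open MvPolynomial Filter

/-- The degree-`d` homogeneous component of a homogeneous ideal `J ⊆ K[x,y,z]`,
as a `K`-vector subspace. -/
noncomputable def degComp {K : Type*} [Field K] (J : Ideal (MvPolynomial (Fin 3) K)) (d : ℕ) :
    Submodule K (MvPolynomial (Fin 3) K) :=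
  Submodule.restrictScalars K J ⊓ homogeneousSubmodule (Fin 3) K d

/-- `dim_K J_d`. -/
noncomputable def hdim {K : Type*} [Field K] (J : Ideal (MvPolynomial (Fin 3) K)) (d : ℕ) : ℕ :=
  Module.finrank K (degComp J d)

/-- The subspace `R_1 · J_{d-1}` of products of linear forms with degree-`(d-1)` elements. -/
noncomputable def oneGen {K : Type*} [Field K] (J : Ideal (MvPolynomial (Fin 3) K)) (d : ℕ) :
    Submodule K (MvPolynomial (Fin 3) K) :=
  Submodule.span K
    {x | ∃ f ∈ homogeneousSubmodule (Fin 3) K 1, ∃ g ∈ degComp J (d - 1), x = f * g}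

/-- `v_d(J) = dim_K J_d / (R_1 · J_{d-1})`, the number of minimal generators of `J`
in degree `d`. -/
noncomputable def vnum {K : Type*} [Field K] (J : Ideal (MvPolynomial (Fin 3) K)) (d : ℕ) : ℕ :=
  Module.finrank K
    (↥(degComp J d) ⧸ Submodule.comap (degComp J d).subtype (oneGen J d))


theorem aux_homog_quot {K : Type*} [Field K] {A h : MvPolynomial (Fin 2) K} {a e : ℕ}
    (hA : A.IsHomogeneous a) (hg : (A * h).IsHomogeneous e) :
    (e < a → A * h = 0) ∧ (a ≤ e → A * h = A * homogeneousComponent (e - a) h) := by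
  have key : A * h = ∑ j ∈ Finset.range (h.totalDegree + 1),
      if e = a + j then A * homogeneousComponent j h else 0 := by
    conv_lhs => rw [← homogeneousComponent_eq_self hg, ← sum_homogeneousComponent h,
      Finset.mul_sum, map_sum]
    refine Finset.sum_congr rfl fun j _ => ?_
    rw [homogeneousComponent_of_mem (m := e) (n := a + j)
      (hA.mul (homogeneousComponent_isHomogeneous j h))]
    try rfl
  constructor
  · intro hlt
    rw [key]
    exact Finset.sum_eq_zero fun j _ => if_neg (by omega)
  · intro hle
    rw [key]
    by_cases hj : e - a ∈ Finset.range (h.totalDegree + 1)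
    · rw [Finset.sum_eq_single_of_mem (e - a) hj]
      · rw [if_pos (by omega)]
      · intro b _ hb
        exact if_neg (by omega)
    · rw [homogeneousComponent_eq_zero (e - a) h (by simp at hj; omega), mul_zero]
      refine Finset.sum_eq_zero fun j hj' => if_neg ?_
      rintro rfl
      apply hj
      simpa using hj'

theorem aux_mem_pow {K : Type*} [Field K] {g : MvPolynomial (Fin 2) K} {e : ℕ} (m : ℕ)
    (hg : g.IsHomogeneous e) : g ∈ idealOfVars (Fin 2) K ^ m ↔ (g = 0 ∨ m ≤ e) := by
  rw [mem_pow_idealOfVars_iff]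
  constructor
  · intro h
    by_cases h0 : g = 0
    · exact Or.inl h0
    · right
      obtain ⟨s, hs⟩ := support_nonempty.mpr h0
      have h1 := h s hs
      rwa [show s.degree = e by
        by_contra hne
        exact (mem_support_iff.mp hs) (hg.coeff_eq_zero hne)] at h1
  · rintro (rfl | h) s hs
    · simp at hs
    · rwa [show s.degree = e by
        by_contra hne
        exact (mem_support_iff.mp hs) (hg.coeff_eq_zero hne)]

section Core

theorem aux_core {K : Type*} [Field K] (l m : ℕ) (hl : 2 < l)
    (J : Ideal (MvPolynomial (Fin 3) K))
    (ψ : MvPolynomial (Fin 3) K ≃ₐ[K] Polynomial (MvPolynomial (Fin 2) K))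
    (h1 : ∀ F d, F.IsHomogeneous d → ∀ k e, k + e = d → ((ψ F).coeff k).IsHomogeneous e)
    (h2 : ∀ F d, F.IsHomogeneous d → ∀ k, d < k → (ψ F).coeff k = 0)
    (h3 : ∀ g e k, g.IsHomogeneous e →
      (ψ.symm (Polynomial.C g * Polynomial.X ^ k)).IsHomogeneous (k + e))
    (G : MvPolynomial (Fin 2) K) (hG : G.IsHomogeneous l) (hG0 : G ≠ 0)
    (hJ : ∀ F, F ∈ J ↔ ∀ k, G ^ (m - k) ∣ (ψ F).coeff k ∧
      (ψ F).coeff k ∈ idealOfVars (Fin 2) K ^ m)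
    (d : ℕ) (hd : 2 * m < d) :
    ((∃ k, d + (l - 1) * k = l * m) → vnum J d = 1) ∧
    ((¬ ∃ k, d + (l - 1) * k = l * m) → vnum J d = 0) := by
  classical
  set T : ℕ → MvPolynomial (Fin 2) K → MvPolynomial (Fin 3) K :=
    fun k g => ψ.symm (Polynomial.C g * Polynomial.X ^ k) with hT
  have hTcoeff : ∀ k g j, (ψ (T k g)).coeff j = if j = k then g else 0 := by
    intro k g j
    simp only [hT, AlgEquiv.apply_symm_apply, Polynomial.coeff_C_mul, Polynomial.coeff_X_pow]
    split_ifs <;> simp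
  have hTmul : ∀ k g k' g', T k g * T k' g' = T (k + k') (g * g') := by
    intro k g k' g'
    simp only [hT]
    rw [← map_mul ψ.symm, Polynomial.C_mul]
    congr 1
    ring
  have hTmem : ∀ k g e d', k + e = d' → g.IsHomogeneous e → G ^ (m - k) ∣ g → m ≤ e →
      T k g ∈ degComp J d' := by
    intro k g e d' hke hg hdiv hme
    refine ⟨?_, ?_⟩
    · change T k g ∈ J
      rw [hJ]
      intro j
      rw [hTcoeff]
      split_ifs with hjk
      · subst hjk
        exact ⟨hdiv, (aux_mem_pow m hg).mpr (Or.inr hme)⟩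
      · simp
    · rw [← hke]
      exact h3 g e k hg
  have hTsum : ∀ (k : ℕ) (s : Finset (Fin 2 →₀ ℕ)) (f : (Fin 2 →₀ ℕ) → MvPolynomial (Fin 2) K),
      T k (∑ i ∈ s, f i) = ∑ i ∈ s, T k (f i) := by
    intro k s f
    simp only [hT, map_sum, Finset.sum_mul]
  have hT1 : (T 1 1).IsHomogeneous 1 := h3 1 0 1 (isHomogeneous_one _ _)
  have hT0 : ∀ i, (T 0 (X i)).IsHomogeneous 1 := by
    intro i
    have := h3 (X i) 1 0 (isHomogeneous_X _ _)
    rwa [zero_add] at this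
  have hpow : ∀ a, (G ^ a).IsHomogeneous (l * a) := fun a => hG.pow a
  -- multiples by a positive degree form
  have hpos : ∀ k e h, k + l * (m - k) + e = d → m < l * (m - k) + e →
      0 < e → h.IsHomogeneous e → T k (G ^ (m - k) * h) ∈ oneGen J d := by
    intro k e h hke hme he hh
    rw [← support_sum_monomial_coeff h, Finset.mul_sum, hTsum]
    refine Submodule.sum_mem _ fun s hs => ?_
    have hdeg : s.degree = e := by
      by_contra hne
      exact (mem_support_iff.mp hs) (hh.coeff_eq_zero hne)
    have hs0 : s ≠ 0 := by
      rintro rfl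
      simp at hdeg
      omega
    obtain ⟨i, hi⟩ := Finsupp.ne_iff.mp hs0
    have hi' : Finsupp.single i 1 ≤ s := by
      rw [Finsupp.single_le_iff]
      simp at hi
      omega
    obtain ⟨t, rfl⟩ := exists_add_of_le hi'
    have htdeg : t.degree + 1 = e := by
      rw [← hdeg, map_add, Finsupp.degree_single, add_comm]
    have hm : (monomial t (coeff (Finsupp.single i 1 + t) h)).IsHomogeneous t.degree :=
      isHomogeneous_monomial _ rfl
    have hEq : T k (G ^ (m - k) * monomial (Finsupp.single i 1 + t)
        (coeff (Finsupp.single i 1 + t) h)) =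
        T 0 (X i) * T k (G ^ (m - k) * monomial t (coeff (Finsupp.single i 1 + t) h)) := by
      rw [hTmul, zero_add]
      congr 1
      rw [X, mul_left_comm, monomial_mul, one_mul]
    rw [hEq]
    refine Submodule.subset_span ⟨_, hT0 i, _, ?_, rfl⟩
    exact hTmem k _ (l * (m - k) + t.degree) (d - 1) (by omega) ((hpow _).mul hm)
      (Dvd.intro _ rfl) (by omega)
  -- the graded pieces
  have hpiece : ∀ F ∈ degComp J d, ∀ k, d + (l - 1) * k ≠ l * m →
      T k ((ψ F).coeff k) ∈ oneGen J d := by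
    intro F hF k hk
    obtain ⟨hFJ, hFd⟩ := hF
    have hFd : F.IsHomogeneous d := hFd
    have hFJ := (hJ F).mp hFJ
    have hT00 : T k 0 ∈ oneGen J d := by simp [hT]
    by_cases hkd : d < k
    · rw [h2 F d hFd k hkd]
      exact hT00
    obtain ⟨e, he⟩ : ∃ e, k + e = d := ⟨d - k, by omega⟩
    have hc := h1 F d hFd k e he
    obtain ⟨hdiv, hmem⟩ := hFJ k
    rw [aux_mem_pow m hc] at hmem
    rcases hmem with h0 | hme
    · rw [h0]; exact hT00
    obtain ⟨h, hh⟩ := hdiv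
    rw [hh] at hc
    obtain ⟨q1, q2⟩ := aux_homog_quot (hpow (m - k)) hc
    by_cases hlt : e < l * (m - k)
    · rw [hh, q1 hlt]; exact hT00
    push Not at hlt
    by_cases hkm : m ≤ k
    · by_cases hem : e = m
      · -- multiply by z
        have hk1 : k - 1 + 1 = k := by omega
        have hz : m - (k - 1) = 0 := by omega
        have : T k ((ψ F).coeff k) = T 1 1 * T (k - 1) ((ψ F).coeff k) := by
          rw [hTmul, one_mul]
          congr 1
          omega
        rw [this]
        refine Submodule.subset_span ⟨_, hT1, _, ?_, rfl⟩
        exact hTmem _ _ e (d - 1) (by omega) (by rw [hh]; exact hc) (by rw [hz]; simp) hme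
      · rw [hh, q2 hlt]
        have hz : m - k = 0 := by omega
        exact hpos k (e - l * (m - k)) _ (by omega) (by omega) (by rw [hz]; omega)
          (homogeneousComponent_isHomogeneous _ _)
    · rw [hh, q2 hlt]
      refine hpos k (e - l * (m - k)) _ (by omega) (by omega) ?_
        (homogeneousComponent_isHomogeneous _ _)
      rcases Nat.eq_or_lt_of_le hlt with heq | hlt'
      · exfalso
        apply hk
        obtain ⟨n, rfl⟩ : ∃ n, m = k + n := ⟨m - k, by omega⟩
        obtain ⟨l', rfl⟩ : ∃ l', l = l' + 1 := ⟨l - 1, by omega⟩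
        have : k + n - k = n := by omega
        rw [this] at heq
        rw [← he, ← heq]
        simp only [Nat.add_sub_cancel]
        ring
      · omega
  have hFsum : ∀ F, F = ∑ k ∈ (ψ F).support, T k ((ψ F).coeff k) := by
    intro F
    apply ψ.injective
    conv_lhs => rw [Polynomial.as_sum_support_C_mul_X_pow (ψ F)]
    simp only [hT, map_sum, AlgEquiv.apply_symm_apply]
  constructor
  · rintro ⟨k, hk⟩
    have hkm : k < m := by
      by_contra hcon
      push Not at hcon
      obtain ⟨l', rfl⟩ : ∃ l', l = l' + 1 := ⟨l - 1, by omega⟩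
      simp only [Nat.add_sub_cancel] at hk
      nlinarith
    have hdk : k + l * (m - k) = d := by
      obtain ⟨n, rfl⟩ : ∃ n, m = k + n := ⟨m - k, by omega⟩
      obtain ⟨l', rfl⟩ : ∃ l', l = l' + 1 := ⟨l - 1, by omega⟩
      have : k + n - k = n := by omega
      rw [this]
      simp only [Nat.add_sub_cancel] at hk
      nlinarith
    have huniq : ∀ k', k' ≠ k → d + (l - 1) * k' ≠ l * m := by
      intro k' hne heq
      apply hne
      have : (l - 1) * k' = (l - 1) * k := by omega
      exact Nat.eq_of_mul_eq_mul_left (by omega) this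
    have hw : T k (G ^ (m - k)) ∈ degComp J d :=
      hTmem k _ (l * (m - k)) d hdk (hpow _) dvd_rfl (by omega)
    -- elements of oneGen have vanishing coefficient
    have hvan : ∀ x ∈ oneGen J d, (ψ x).coeff k = 0 := by
      intro x hx
      refine Submodule.span_induction ?_ ?_ ?_ ?_ hx
      · rintro x ⟨f, hf, g, hg, rfl⟩
        have hf : f.IsHomogeneous 1 := hf
        obtain ⟨hgJ, hgd⟩ := hg
        have hgd : g.IsHomogeneous (d - 1) := hgd
        have hgJ := (hJ g).mp hgJ
        rw [map_mul, Polynomial.coeff_mul]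
        refine Finset.sum_eq_zero ?_
        rintro ⟨a, b⟩ hab
        rw [Finset.HasAntidiagonal.mem_antidiagonal] at hab
        simp only at hab ⊢
        by_cases ha : 1 < a
        · rw [h2 f 1 hf a ha, zero_mul]
        have hz : (ψ g).coeff b = 0 := by
          obtain ⟨hdiv, -⟩ := hgJ b
          have hc := h1 g (d - 1) hgd b (d - 1 - b) (by omega)
          obtain ⟨h, hh⟩ := hdiv
          rw [hh] at hc ⊢
          refine (aux_homog_quot (hpow _) hc).1 ?_
          have : l * (m - k) + l * (k - b) ≤ l * (m - b) := by
            rw [← Nat.mul_add]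
            exact Nat.mul_le_mul_left _ (by omega)
          have : k - b ≤ l * (k - b) := Nat.le_mul_of_pos_left _ (by omega)
          omega
        rw [hz, mul_zero]
      · simp
      · intro x y _ _ hx hy
        rw [map_add, Polynomial.coeff_add, hx, hy, add_zero]
      · intro c x _ hx
        rw [map_smul, Polynomial.coeff_smul, hx, smul_zero]
    unfold vnum
    refine finrank_eq_one (Submodule.Quotient.mk ⟨_, hw⟩) ?_ ?_
    · intro hzero
      rw [Submodule.Quotient.mk_eq_zero] at hzero
      have := hvan _ hzero
      simp only [Submodule.subtype_apply, hTcoeff, if_true] at this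
      exact pow_ne_zero _ hG0 this
    · intro q
      obtain ⟨⟨F, hF⟩, rfl⟩ := Submodule.Quotient.mk_surjective _ q
      have hFd : F.IsHomogeneous d := hF.2
      have hFJ := (hJ F).mp hF.1
      obtain ⟨hdiv, -⟩ := hFJ k
      have hc := h1 F d hFd k (l * (m - k)) hdk
      obtain ⟨h, hh⟩ := hdiv
      rw [hh] at hc
      have q2 := (aux_homog_quot (hpow _) hc).2 le_rfl
      rw [Nat.sub_self, homogeneousComponent_zero] at q2
      refine ⟨coeff 0 h, ?_⟩
      rw [← Submodule.Quotient.mk_smul, Submodule.Quotient.eq, Submodule.mem_comap]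
      rw [← Submodule.neg_mem_iff]
      have hcT : T k ((ψ F).coeff k) = coeff 0 h • T k (G ^ (m - k)) := by
        rw [hh, q2]
        simp only [hT, ← map_smul]
        congr 1
        rw [mul_comm (G ^ (m - k)), ← smul_eq_C_mul, ← Polynomial.smul_C, smul_mul_assoc]
      change -(coeff 0 h • T k (G ^ (m - k)) - F) ∈ oneGen J d
      rw [← hcT, neg_sub]
      nth_rewrite 1 [hFsum F]
      by_cases hks : k ∈ (ψ F).support
      · rw [← Finset.add_sum_erase _ _ hks, add_sub_cancel_left]
        refine Submodule.sum_mem _ fun j hj => hpiece F hF j (huniq j ?_)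
        exact (Finset.mem_erase.mp hj).1
      · have : (ψ F).coeff k = 0 := by simpa using hks
        rw [this]
        have h00 : T k 0 = 0 := by simp [hT]
        rw [h00, sub_zero]
        refine Submodule.sum_mem _ fun j hj => hpiece F hF j (huniq j ?_)
        rintro rfl
        exact hks hj
  · intro hno
    push Not at hno
    unfold vnum
    have : Submodule.comap (degComp J d).subtype (oneGen J d) = ⊤ := by
      rw [eq_top_iff]
      rintro ⟨F, hF⟩ -
      change F ∈ oneGen J d
      rw [hFsum F]
      exact Submodule.sum_mem _ fun k _ => hpiece F hF k (hno k)
    rw [this]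
    exact Module.finrank_zero_of_subsingleton

end Core

theorem aux_mem_span_pow {S : Type*} [CommRing S] (a : S) (m : ℕ) (f : Polynomial S) :
    f ∈ (Ideal.span {Polynomial.X, Polynomial.C a} : Ideal (Polynomial S)) ^ m ↔
      ∀ k, a ^ (m - k) ∣ f.coeff k := by
  constructor
  · intro h
    induction m generalizing f with
    | zero => intro k; simp
    | succ m ih =>
      rw [pow_succ'] at h
      refine Submodule.mul_induction_on h ?_ ?_
      · intro u hu v hv k
        obtain ⟨c, e, rfl⟩ := Ideal.mem_span_pair.mp hu
        have hcv : c * v ∈ (Ideal.span {Polynomial.X, Polynomial.C a} :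
            Ideal (Polynomial S)) ^ m := Ideal.mul_mem_left _ _ hv
        have hev : e * v ∈ (Ideal.span {Polynomial.X, Polynomial.C a} :
            Ideal (Polynomial S)) ^ m := Ideal.mul_mem_left _ _ hv
        have e1 : (c * Polynomial.X + e * Polynomial.C a) * v =
            Polynomial.X * (c * v) + Polynomial.C a * (e * v) := by ring
        rw [e1, Polynomial.coeff_add, Polynomial.coeff_C_mul]
        refine dvd_add ?_ ?_
        · cases k with
          | zero => simp
          | succ k =>
            rw [Polynomial.coeff_X_mul, Nat.add_sub_add_right]
            exact ih _ hcv k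
        · refine (pow_dvd_pow a (show m + 1 - k ≤ 1 + (m - k) by omega)).trans ?_
          rw [pow_add, pow_one]
          exact mul_dvd_mul_left _ (ih _ hev k)
      · intro x y hx hy k
        rw [Polynomial.coeff_add]
        exact dvd_add (hx k) (hy k)
  · intro h
    rw [Polynomial.as_sum_support_C_mul_X_pow f]
    refine Ideal.sum_mem _ fun k _ => ?_
    obtain ⟨c, hc⟩ := h k
    rw [hc]
    have e1 : Polynomial.C (a ^ (m - k) * c) * Polynomial.X ^ k =
        Polynomial.C c * (Polynomial.C a ^ (m - k) * Polynomial.X ^ k) := by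
      rw [Polynomial.C_mul, Polynomial.C_pow]; ring
    rw [e1]
    refine Ideal.mul_mem_left _ _ ?_
    refine Ideal.pow_le_pow_right (show m ≤ (m - k) + k by omega) ?_
    rw [pow_add]
    exact Ideal.mul_mem_mul (Ideal.pow_mem_pow (Ideal.subset_span (by simp)) _)
      (Ideal.pow_mem_pow (Ideal.subset_span (by simp)) _)

/-- The linear form in two variables attached to the point `(q 1 : q 2)`. -/
noncomputable def auxLin {K : Type*} [Field K] (q : Fin 3 → K) : MvPolynomial (Fin 2) K :=
  C (q 1) * X 1 - C (q 2) * X 0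

theorem auxLin_homog {K : Type*} [Field K] (q : Fin 3 → K) : (auxLin q).IsHomogeneous 1 :=
  (isHomogeneous_C_mul_X _ _).sub (isHomogeneous_C_mul_X _ _)

theorem auxLin_ne_zero {K : Type*} [Field K] (q : Fin 3 → K) (h0 : q 0 = 0) (hq : q ≠ 0) :
    auxLin q ≠ 0 := by
  intro h
  apply hq
  have e1 := congrArg (eval ![0, 1]) h
  have e2 := congrArg (eval ![1, 0]) h
  simp [auxLin] at e1 e2
  ext i
  fin_cases i <;> simp [h0, e1, e2]

theorem auxLin_relPrime {K : Type*} [Field K] (q r : Fin 3 → K)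
    (hD : q 1 * r 2 - q 2 * r 1 ≠ 0) : IsRelPrime (auxLin q) (auxLin r) := by
  intro c hcq hcr
  have hu : ∀ x : MvPolynomial (Fin 2) K, c ∣ C (q 1 * r 2 - q 2 * r 1) * x → c ∣ x := by
    intro x hx
    have := hx.mul_left (C (q 1 * r 2 - q 2 * r 1)⁻¹)
    rwa [← mul_assoc, ← C_mul, inv_mul_cancel₀ hD, C_1, one_mul] at this
  have hx0 : c ∣ X 0 := by
    apply hu
    have := dvd_sub (hcq.mul_left (C (r 1))) (hcr.mul_left (C (q 1)))
    convert this using 1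
    simp only [auxLin, C_mul, C_sub]
    ring
  have hx1 : c ∣ X 1 := by
    apply hu
    have := dvd_sub (hcq.mul_left (C (r 2))) (hcr.mul_left (C (q 2)))
    convert this using 1
    simp only [auxLin, C_mul, C_sub]
    ring
  by_contra hc
  have hirr : Irreducible (X 0 : MvPolynomial (Fin 2) K) := X_prime.irreducible
  have hass := (hirr.dvd_iff.mp hx0).resolve_left hc
  have h01 := hass.dvd.trans hx1
  simp [X_dvd_X] at h01

theorem aux_point_ideal {K : Type*} [Field K] (p : Fin 3 → K) (i0 : Fin 3) (hi0 : p i0 ≠ 0)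
    (Q : Ideal (MvPolynomial (Fin 3) K))
    (hQ : ∀ F, F ∈ Q ↔ ∀ n, eval p (homogeneousComponent n F) = 0) :
    Q = Ideal.span (Set.range fun j : Fin 3 => C (p i0) * X j - C (p j) * X i0) := by
  set I := Ideal.span (Set.range fun j : Fin 3 => C (p i0) * X j - C (p j) * X i0) with hI
  apply le_antisymm
  · intro F hF
    rw [hQ] at hF
    rw [← sum_homogeneousComponent F]
    refine Ideal.sum_mem _ fun n _ => ?_
    have hn := hF n
    set g := homogeneousComponent n F with hg
    have hgh : g.IsHomogeneous n := homogeneousComponent_isHomogeneous n F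
    -- substitution
    have hsub : ∀ x : MvPolynomial (Fin 3) K,
        Ideal.Quotient.mkₐ K I x =
          Ideal.Quotient.mkₐ K I (aeval (fun j => C (p j * (p i0)⁻¹) * X i0) x) := by
      intro x
      have : Ideal.Quotient.mkₐ K I = (Ideal.Quotient.mkₐ K I).comp
          (aeval (fun j => C (p j * (p i0)⁻¹) * X i0)) := by
        apply algHom_ext
        intro j
        rw [AlgHom.comp_apply, aeval_X]
        rw [Ideal.Quotient.mkₐ_eq_mk, Ideal.Quotient.eq]
        have hm : C (p i0)⁻¹ * (C (p i0) * X j - C (p j) * X i0) ∈ I :=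
          Ideal.mul_mem_left _ _ (Ideal.subset_span ⟨j, rfl⟩)
        convert hm using 1
        rw [mul_sub, ← mul_assoc, ← C_mul, inv_mul_cancel₀ hi0, C_1, one_mul, ← mul_assoc,
          ← C_mul, mul_comm (p j)]
      exact DFunLike.congr_fun this x
    have hz : aeval (fun j => C (p j * (p i0)⁻¹) * X i0) g = (0 : MvPolynomial (Fin 3) K) := by
      have : ∀ s ∈ g.support,
          aeval (fun j => (C (p j * (p i0)⁻¹) * X i0 : MvPolynomial (Fin 3) K))
            (monomial s (coeff s g)) =
          C (eval p (monomial s (coeff s g))) * (C (p i0)⁻¹ * X i0) ^ n := by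
        intro s hs
        have hdeg : s.degree = n := by
          by_contra hne
          exact (mem_support_iff.mp hs) (hgh.coeff_eq_zero hne)
        rw [aeval_monomial, eval_monomial, ← hdeg]
        simp only [Finsupp.prod_fintype, pow_zero, implies_true, Fin.prod_univ_three,
          Finsupp.degree_eq_sum, Fin.sum_univ_three, C_mul, C_pow, algebraMap_eq]
        ring
      rw [← support_sum_monomial_coeff g, map_sum, Finset.sum_congr rfl this, ← Finset.sum_mul,
        ← map_sum, ← map_sum, support_sum_monomial_coeff g, hn, C_0, zero_mul]
    have := hsub g
    rw [hz, map_zero, Ideal.Quotient.mkₐ_eq_mk, Ideal.Quotient.eq_zero_iff_mem] at this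
    exact this
  · rw [hI, Ideal.span_le]
    rintro _ ⟨j, rfl⟩
    change _ ∈ Q
    rw [hQ]
    intro n
    have hh : (C (p i0) * X j - C (p j) * X i0 : MvPolynomial (Fin 3) K) ∈
        homogeneousSubmodule (Fin 3) K 1 :=
      (isHomogeneous_C_mul_X _ _).sub (isHomogeneous_C_mul_X _ _)
    rw [homogeneousComponent_of_mem hh]
    split_ifs
    · simp [mul_comm]
    · simp

theorem aux_on {K : Type*} [Field K] (q : Fin 3 → K) (h0 : q 0 = 0) (hq : q ≠ 0)
    (Q : Ideal (MvPolynomial (Fin 3) K))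
    (hQ : ∀ F, F ∈ Q ↔ ∀ n, eval q (homogeneousComponent n F) = 0) :
    Q.map (finSuccEquiv K 2) = Ideal.span {Polynomial.X, Polynomial.C (auxLin q)} := by
  have hX1 : finSuccEquiv K 2 (X 1) = Polynomial.C (X 0) := finSuccEquiv_X_succ (j := 0)
  have hX2 : finSuccEquiv K 2 (X 2) = Polynomial.C (X 1) := finSuccEquiv_X_succ (j := 1)
  have hC : ∀ c : K, finSuccEquiv K 2 (C c) = Polynomial.C (C c) := fun c => by
    simp [finSuccEquiv_apply]
  have hgen : ∀ j, j ≠ 0 → q j ≠ 0 → Q.map (finSuccEquiv K 2) =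
      Ideal.span {Polynomial.X, Polynomial.C (auxLin q)} := by
    intro i0 hi hi0
    rw [aux_point_ideal q i0 hi0 Q hQ, Ideal.map_span]
    apply le_antisymm
    · rw [Ideal.span_le]
      rintro _ ⟨_, ⟨j, rfl⟩, rfl⟩
      change _ ∈ Ideal.span _
      rw [Ideal.mem_span_pair]
      fin_cases i0
      · exact absurd rfl hi
      · fin_cases j
        · refine ⟨Polynomial.C (C (q 1)), 0, ?_⟩
          simp [hC, h0, finSuccEquiv_X_zero]
        · exact ⟨0, 0, by simp⟩
        · refine ⟨0, 1, ?_⟩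
          simp [hC, hX1, hX2, auxLin]
      · fin_cases j
        · refine ⟨Polynomial.C (C (q 2)), 0, ?_⟩
          simp [hC, h0, finSuccEquiv_X_zero]
        · refine ⟨0, -1, ?_⟩
          simp [hC, hX1, hX2, auxLin]
          ring
        · exact ⟨0, 0, by simp⟩
    · rw [Ideal.span_le]
      have hin : ∀ j, finSuccEquiv K 2 (C (q i0) * X j - C (q j) * X i0) ∈
        Ideal.span (finSuccEquiv K 2 '' Set.range fun j : Fin 3 =>
          C (q i0) * X j - C (q j) * X i0) := fun j =>
        Ideal.subset_span ⟨_, ⟨j, rfl⟩, rfl⟩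
      rintro x (rfl | rfl)
      · have h := Ideal.mul_mem_left _ (Polynomial.C (C (q i0)⁻¹)) (hin 0)
        convert h using 1
        rw [h0, map_sub, map_mul, map_mul, hC, C_0, map_zero, zero_mul, sub_zero,
          finSuccEquiv_X_zero, ← mul_assoc, ← Polynomial.C_mul, ← C_mul, inv_mul_cancel₀ hi0]
        simp
      · fin_cases i0
        · exact absurd rfl hi
        · have h := hin 2
          convert h using 1
          simp [hC, hX1, hX2, auxLin]
        · have h := Ideal.mul_mem_left _ (-1) (hin 1)
          have e : Polynomial.C (auxLin q) = -1 * finSuccEquiv K 2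
              (C (q 2) * X 1 - C (q 1) * X 2) := by
            simp [hC, hX1, hX2, auxLin]
            ring
          rw [e]
          exact h
  by_cases h1 : q 1 = 0
  · by_cases h2 : q 2 = 0
    · exfalso
      apply hq
      ext i
      fin_cases i <;> simp [h0, h1, h2]
    · exact hgen 2 (by decide) h2
  · exact hgen 1 (by decide) h1

theorem aux_off {K : Type*} [Field K] (q : Fin 3 → K) (h0 : q 0 ≠ 0) (h1 : q 1 = 0) (h2 : q 2 = 0)
    (Q : Ideal (MvPolynomial (Fin 3) K))
    (hQ : ∀ F, F ∈ Q ↔ ∀ n, eval q (homogeneousComponent n F) = 0) :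
    Q.map (finSuccEquiv K 2) =
      (idealOfVars (Fin 2) K).map (Polynomial.C : _ →+* Polynomial (MvPolynomial (Fin 2) K)) := by
  have hC : ∀ c : K, finSuccEquiv K 2 (C c) = Polynomial.C (C c) := fun c => by
    simp [finSuccEquiv_apply]
  rw [aux_point_ideal q 0 h0 Q hQ, Ideal.map_span, idealOfVars, Ideal.map_span]
  have hq : ∀ j : Fin 2, q j.succ = 0 := by
    intro j; fin_cases j
    · exact h1
    · exact h2
  apply le_antisymm
  · rw [Ideal.span_le]
    rintro _ ⟨_, ⟨j, rfl⟩, rfl⟩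
    change _ ∈ Ideal.span _
    refine Fin.cases ?_ (fun j => ?_) j
    · simp
    · simp only [hq, C_0, zero_mul, sub_zero, map_mul, finSuccEquiv_X_succ]
      exact Ideal.mul_mem_left _ _ (Ideal.subset_span ⟨_, ⟨j, rfl⟩, rfl⟩)
  · rw [Ideal.span_le]
    rintro _ ⟨_, ⟨j, rfl⟩, rfl⟩
    have hin : finSuccEquiv K 2 (C (q 0) * X j.succ - C (q j.succ) * X 0) ∈
        Ideal.span (finSuccEquiv K 2 '' Set.range fun j : Fin 3 =>
          C (q 0) * X j - C (q j) * X 0) := Ideal.subset_span ⟨_, ⟨j.succ, rfl⟩, rfl⟩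
    have h := Ideal.mul_mem_left _ (Polynomial.C (C (q 0)⁻¹)) hin
    change Polynomial.C (X j) ∈ _
    convert h using 1
    rw [hq, map_sub, map_mul, map_mul, hC, C_0, map_zero, zero_mul, sub_zero,
      finSuccEquiv_X_succ, ← mul_assoc, ← Polynomial.C_mul, ← C_mul, inv_mul_cancel₀ h0]
    simp

theorem aux_coord {K : Type*} [Field K] (A B : Matrix (Fin 3) (Fin 3) K)
    (hAB : A * B = 1) (hBA : B * A = 1) :
    ∃ φ : MvPolynomial (Fin 3) K ≃ₐ[K] MvPolynomial (Fin 3) K,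
      (∀ F d, F.IsHomogeneous d → (φ F).IsHomogeneous d) ∧
      (∀ F d, F.IsHomogeneous d → (φ.symm F).IsHomogeneous d) ∧
      (∀ F x, eval x (φ.symm F) = eval (A.mulVec x) F) := by
  have hcomp : ∀ A B : Matrix (Fin 3) (Fin 3) K, A * B = 1 →
      (aeval (fun i => ∑ j, C (B i j) * X j : Fin 3 → MvPolynomial (Fin 3) K)).comp
        (aeval (fun i => ∑ j, C (A i j) * X j : Fin 3 → MvPolynomial (Fin 3) K)) =
        AlgHom.id K (MvPolynomial (Fin 3) K) := by
    intro A B h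
    apply algHom_ext
    intro i
    simp only [AlgHom.comp_apply, aeval_X, map_sum, map_mul, aeval_C, algebraMap_eq,
      AlgHom.id_apply, Finset.mul_sum]
    rw [Finset.sum_comm]
    have : ∀ k, ∑ j, (C (A i j) * (C (B j k) * X k) : MvPolynomial (Fin 3) K) =
        C ((A * B) i k) * X k := by
      intro k
      rw [Matrix.mul_apply, map_sum, Finset.sum_mul]
      refine Finset.sum_congr rfl fun j _ => ?_
      rw [C_mul, mul_assoc]
    simp only [this, h, Matrix.one_apply]
    simp
  have hh : ∀ (A : Matrix (Fin 3) (Fin 3) K) (F : MvPolynomial (Fin 3) K) (d : ℕ),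
      F.IsHomogeneous d →
      (aeval (fun i => ∑ j, C (A i j) * X j : Fin 3 → MvPolynomial (Fin 3) K) F).IsHomogeneous d := by
    intro A F d hF
    have := hF.aeval (fun i => ∑ j, C (A i j) * X j : Fin 3 → MvPolynomial (Fin 3) K) (n := 1)
      (fun i => IsHomogeneous.sum _ _ _ fun j _ => isHomogeneous_C_mul_X _ _)
    simpa using this
  refine ⟨AlgEquiv.ofAlgHom (aeval (fun i => ∑ j, C (B i j) * X j))
    (aeval (fun i => ∑ j, C (A i j) * X j)) (hcomp A B hAB) (hcomp B A hBA), ?_, ?_, ?_⟩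
  · exact hh B
  · exact hh A
  · intro F x
    change eval x (aeval (fun i => ∑ j, C (A i j) * X j : Fin 3 → MvPolynomial (Fin 3) K) F) = _
    have : (aeval x : MvPolynomial (Fin 3) K →ₐ[K] K).comp
        (aeval (fun i => ∑ j, C (A i j) * X j : Fin 3 → MvPolynomial (Fin 3) K)) =
        aeval (A.mulVec x) := by
      apply algHom_ext
      intro i
      simp [Matrix.mulVec, dotProduct]
    have h := DFunLike.congr_fun this F
    simpa [aeval_eq_eval] using h

theorem aux_comp {K : Type*} [Field K]
    (φ : MvPolynomial (Fin 3) K ≃ₐ[K] MvPolynomial (Fin 3) K)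
    (h : ∀ F d, F.IsHomogeneous d → (φ F).IsHomogeneous d) (n : ℕ) (F : MvPolynomial (Fin 3) K) :
    homogeneousComponent n (φ F) = φ (homogeneousComponent n F) := by
  conv_lhs => rw [← sum_homogeneousComponent F]
  rw [map_sum, map_sum]
  have : ∀ j ∈ Finset.range (F.totalDegree + 1),
      homogeneousComponent n (φ (homogeneousComponent j F)) =
      if n = j then φ (homogeneousComponent j F) else 0 := by
    intro j _
    rw [homogeneousComponent_of_mem (n := j) (h _ _ (homogeneousComponent_isHomogeneous j F))]
  rw [Finset.sum_congr rfl this, Finset.sum_ite_eq]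
  split_ifs with hn
  · rfl
  · rw [homogeneousComponent_eq_zero n F (by simp at hn; omega), map_zero]

theorem aux_mem_map {R S K : Type*} [CommRing K] [CommRing R] [CommRing S] [Algebra K R]
    [Algebra K S] (e : R ≃ₐ[K] S) (I : Ideal R) (x : R) : e x ∈ I.map e ↔ x ∈ I := by
  constructor
  · intro h
    have h2 := Ideal.mem_map_of_mem (e.symm : S →ₐ[K] R) h
    have : (I.map e).map (e.symm : S →ₐ[K] R) ≤ I := by
      rw [Ideal.map_le_iff_le_comap, Ideal.map_le_iff_le_comap]
      intro y hy
      simpa [Ideal.mem_comap] using hy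
    have := this h2
    simpa using this
  · exact fun h => Ideal.mem_map_of_mem e h

theorem aux_sum (l m : ℕ) (hl : 2 < l) (hdvd : l * (l - 1) ∣ m) (v : ℕ → ℕ)
    (hv : ∀ d, 2 * m < d → ((∃ k, d + (l - 1) * k = l * m) → v d = 1) ∧
      ((¬ ∃ k, d + (l - 1) * k = l * m) → v d = 0)) :
    ∑ᶠ d ∈ Set.Ioi (2 * m), v d = m - m / (l - 1) := by
  classical
  obtain ⟨n, rfl⟩ : ∃ n, l = n + 1 := ⟨l - 1, by omega⟩
  simp only [Nat.add_sub_cancel] at *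
  obtain ⟨t, ht⟩ : n ∣ m := (Dvd.intro_left _ rfl).trans hdvd
  have hdiv : m / n = t := by
    rw [ht]; exact Nat.mul_div_cancel_left _ (by omega)
  rw [hdiv]
  have htm : t ≤ m := by rw [ht]; exact Nat.le_mul_of_pos_left _ (by omega)
  have hbd : ∀ k, k < m - t → 2 * m + n * k < (n + 1) * m := by
    intro k hk
    have h1 : n * (k + t + 1) ≤ n * m := Nat.mul_le_mul_left _ (by omega)
    rw [mul_add, mul_add, ← ht] at h1
    rw [add_mul]
    omega
  set S := (Finset.range (m - t)).image (fun k => (n + 1) * m - n * k) with hS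
  have hfun : (fun d => ∑ᶠ _ : d ∈ Set.Ioi (2 * m), v d) = fun d => if d ∈ S then 1 else 0 := by
    funext d
    by_cases hd : 2 * m < d
    · rw [finsum_eq_if, if_pos (by exact hd)]
      by_cases hex : ∃ k, d + n * k = (n + 1) * m
      · rw [(hv d hd).1 hex, if_pos]
        obtain ⟨k, hk⟩ := hex
        rw [hS, Finset.mem_image]
        refine ⟨k, ?_, by omega⟩
        rw [Finset.mem_range]
        by_contra hcon
        have h1 : n * m ≤ n * (k + t) := Nat.mul_le_mul_left _ (by omega)
        rw [mul_add, ← ht] at h1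
        rw [add_mul] at hk
        omega
      · rw [(hv d hd).2 hex, if_neg]
        intro hmem
        rw [hS, Finset.mem_image] at hmem
        obtain ⟨k, hk, rfl⟩ := hmem
        apply hex
        have := hbd k (Finset.mem_range.mp hk)
        exact ⟨k, by omega⟩
    · rw [finsum_eq_if, if_neg (by exact hd), if_neg]
      intro hmem
      rw [hS, Finset.mem_image] at hmem
      obtain ⟨k, hk, rfl⟩ := hmem
      have := hbd k (Finset.mem_range.mp hk)
      omega
  rw [hfun, finsum_eq_sum_of_support_subset (s := S)]
  · rw [Finset.sum_congr rfl (fun x hx => if_pos hx)]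
    rw [Finset.sum_const, smul_eq_mul, mul_one, hS, Finset.card_image_of_injOn,
      Finset.card_range]
    intro a ha b hb hab
    have h1 := hbd a (by simpa using ha)
    have h2 := hbd b (by simpa using hb)
    have h3 : n * a = n * b := by
      simp only at hab
      omega
    exact Nat.eq_of_mul_eq_mul_left (by omega) h3
  · intro x hx
    by_contra hcon
    have hcon' : x ∉ S := hcon
    simp [hcon'] at hx

set_option maxHeartbeats 1000000 in
theorem aux_main {K : Type*} [Field K]
    (l : ℕ) (hl : 2 < l)
    (p : Fin (l + 1) → Fin 3 → K) (hp0 : ∀ i, p i ≠ 0)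
    (hdist : ∀ i j, i ≠ j → ∀ c : K, c • p i ≠ p j)
    (L : Fin 3 → K)
    (hon : ∀ i : Fin (l + 1), (i : ℕ) < l → ∑ j, L j * p i j = 0)
    (hoff : ∑ j, L j * p (Fin.last l) j ≠ 0)
    (P : Fin (l + 1) → Ideal (MvPolynomial (Fin 3) K))
    (hP : ∀ i F, F ∈ P i ↔ ∀ n, eval (p i) (homogeneousComponent n F) = 0)
    (m : ℕ)
    (Im : Ideal (MvPolynomial (Fin 3) K)) (hIm : Im = ⨅ i, P i ^ m) (d : ℕ) (hd : 2 * m < d) :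
    ((∃ k, d + (l - 1) * k = l * m) → vnum Im d = 1) ∧
    ((¬ ∃ k, d + (l - 1) * k = l * m) → vnum Im d = 0) := by
  classical
  set i0 : Fin (l + 1) := ⟨0, by omega⟩ with hi0
  set i1 : Fin (l + 1) := ⟨1, by omega⟩ with hi1
  set B : Matrix (Fin 3) (Fin 3) K :=
    (Matrix.of ![p (Fin.last l), p i0, p i1]).transpose with hB
  have hBv : ∀ v j, B.mulVec v j = p (Fin.last l) j * v 0 + p i0 j * v 1 + p i1 j * v 2 := by
    intro v j
    simp [hB, Matrix.mulVec, dotProduct, Fin.sum_univ_three]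
  have hLB : ∀ v, ∑ j, L j * B.mulVec v j = (∑ j, L j * p (Fin.last l) j) * v 0 := by
    intro v
    have e0 := hon i0 (by simp [hi0]; omega)
    have e1 := hon i1 (by simp [hi1]; omega)
    simp only [hBv, Fin.sum_univ_three] at *
    linear_combination v 1 * e0 + v 2 * e1
  have hdet : B.det ≠ 0 := by
    intro hdet
    obtain ⟨v, hv, hBv0⟩ := Matrix.exists_mulVec_eq_zero_iff.mpr hdet
    have hv0 : v 0 = 0 := by
      have := hLB v
      rw [hBv0] at this
      simp at this
      rcases this with h | h
      · exact absurd h hoff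
      · exact h
    have hrel : ∀ j, p i0 j * v 1 + p i1 j * v 2 = 0 := by
      intro j
      have := hBv v j
      rw [hBv0, hv0] at this
      simpa using this.symm
    have hv2 : v 2 = 0 := by
      by_contra h2
      refine hdist i0 i1 (by simp [hi0, hi1]) (-v 1 / v 2) ?_
      ext j
      have := hrel j
      simp only [Pi.smul_apply, smul_eq_mul]
      field_simp
      linear_combination -this
    have hv1 : v 1 = 0 := by
      by_contra h1
      apply hp0 i0
      ext j
      have := hrel j
      rw [hv2, mul_zero, add_zero] at this
      exact (mul_eq_zero.mp this).resolve_right h1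
    apply hv
    ext j
    fin_cases j <;> simp [hv0, hv1, hv2]
  have hAB : B⁻¹ * B = 1 := Matrix.nonsing_inv_mul B (isUnit_iff_ne_zero.mpr hdet)
  have hBA : B * B⁻¹ = 1 := Matrix.mul_nonsing_inv B (isUnit_iff_ne_zero.mpr hdet)
  obtain ⟨φ, hφ, hφs, hφe⟩ := aux_coord B⁻¹ B hAB hBA
  set q : Fin (l + 1) → Fin 3 → K := fun i => B⁻¹.mulVec (p i) with hq
  have hBq : ∀ i, B.mulVec (q i) = p i := by
    intro i
    simp [hq, Matrix.mulVec_mulVec, hBA]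
  have hq0 : ∀ i, q i ≠ 0 := by
    intro i h
    apply hp0 i
    rw [← hBq i, h, Matrix.mulVec_zero]
  have hqdist : ∀ i j, i ≠ j → ∀ c : K, c • q i ≠ q j := by
    intro i j hij c h
    apply hdist i j hij c
    rw [← hBq i, ← hBq j, ← h, Matrix.mulVec_smul]
  have hqon : ∀ i : Fin l, q i.castSucc 0 = 0 := by
    intro i
    have h1 := hLB (q i.castSucc)
    rw [hBq, hon _ (by simp)] at h1
    exact (mul_eq_zero.mp h1.symm).resolve_left hoff
  have hqlast : q (Fin.last l) = ![1, 0, 0] := by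
    have : p (Fin.last l) = B.mulVec ![1, 0, 0] := by
      ext j
      rw [hBv]
      simp
    simp only [hq]
    rw [this, Matrix.mulVec_mulVec, hAB, Matrix.one_mulVec]
  have hQ : ∀ i F, F ∈ (P i).map φ ↔ ∀ n, eval (q i) (homogeneousComponent n F) = 0 := by
    intro i F
    obtain ⟨F', rfl⟩ := φ.surjective F
    rw [aux_mem_map, hP]
    refine forall_congr' fun n => ?_
    rw [aux_comp φ hφ, ← hφe, AlgEquiv.symm_apply_apply]
  set ψ := φ.trans (finSuccEquiv K 2) with hψ
  have hmapψ : ∀ I : Ideal (MvPolynomial (Fin 3) K),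
      I.map ψ = (I.map φ).map (finSuccEquiv K 2) := by
    intro I
    apply le_antisymm
    · rw [Ideal.map_le_iff_le_comap]
      intro x hx
      exact Ideal.mem_map_of_mem _ (Ideal.mem_map_of_mem _ hx)
    · rw [Ideal.map_le_iff_le_comap, Ideal.map_le_iff_le_comap]
      intro x hx
      exact Ideal.mem_map_of_mem ψ hx
  set G : MvPolynomial (Fin 2) K := ∏ i : Fin l, auxLin (q i.castSucc) with hG
  have hrel : ∀ i j : Fin l, i ≠ j →
      IsRelPrime (auxLin (q i.castSucc)) (auxLin (q j.castSucc)) := by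
    intro i j hij
    apply auxLin_relPrime
    intro hD
    have hne : i.castSucc ≠ j.castSucc := fun h => hij (Fin.castSucc_injective _ h)
    have h0 := hqon i
    have h0' := hqon j
    have hgen : ∀ a b : Fin 3, (∀ c, c = 0 ∨ c = a ∨ c = b) → q i.castSucc a ≠ 0 →
        q i.castSucc a * q j.castSucc b - q i.castSucc b * q j.castSucc a = 0 → False := by
      intro a b hab ha hD
      refine hqdist _ _ hne (q j.castSucc a / q i.castSucc a) ?_
      ext c
      rw [Pi.smul_apply, smul_eq_mul]
      rcases hab c with rfl | rfl | rfl
      · rw [h0, h0', mul_zero]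
      · field_simp
      · field_simp
        linear_combination -hD
    by_cases h1 : q i.castSucc 1 = 0
    · by_cases h2 : q i.castSucc 2 = 0
      · apply hq0 i.castSucc
        ext c
        fin_cases c <;> simp [h0, h1, h2]
      · exact hgen 2 1 (by decide) h2 (by linear_combination -hD)
    · exact hgen 1 2 (by decide) h1 hD
  refine aux_core l m hl Im ψ ?_ ?_ ?_ G ?_ ?_ ?_ d hd
  · intro F d hF k e hke
    exact (hφ F d hF).finSuccEquiv_coeff_isHomogeneous k e hke
  · intro F d hF k hk
    by_contra hne
    have h1 := totalDegree_coeff_finSuccEquiv_add_le (φ F) k hne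
    have h2 := (hφ F d hF).totalDegree_le
    omega
  · intro g e k hg
    have h1 : finSuccEquiv K 2 (rename Fin.succ g * X 0 ^ k) =
        Polynomial.C g * Polynomial.X ^ k := by
      rw [map_mul, map_pow, finSuccEquiv_X_zero]
      congr 1
      have h := DFunLike.congr_fun (algHom_ext (σ := Fin 2)
        (f := ((finSuccEquiv K 2 : MvPolynomial (Fin 3) K →ₐ[K] _).comp (rename Fin.succ)))
        (g := Polynomial.CAlgHom) (fun i => by
          simp [finSuccEquiv_X_succ])) g
      exact h
    have h2 : ψ.symm (Polynomial.C g * Polynomial.X ^ k) =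
        φ.symm (rename Fin.succ g * X 0 ^ k) := by
      rw [← h1, hψ]
      simp
    rw [h2]
    apply hφs
    have h4 := (isHomogeneous_X_pow (R := K) (0 : Fin 3) k).mul
      (hg.rename_isHomogeneous (f := Fin.succ))
    rwa [mul_comm] at h4
  · have := IsHomogeneous.prod Finset.univ (fun i : Fin l => auxLin (q i.castSucc)) (fun _ => 1)
      (fun i _ => auxLin_homog _)
    simpa using this
  · exact Finset.prod_ne_zero_iff.mpr fun i _ => auxLin_ne_zero _ (hqon i) (hq0 _)
  · intro F
    rw [hIm, Ideal.mem_iInf]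
    have hlast : F ∈ P (Fin.last l) ^ m ↔
        ∀ k, (ψ F).coeff k ∈ idealOfVars (Fin 2) K ^ m := by
      rw [← aux_mem_map ψ, Ideal.map_pow, hmapψ,
        aux_off (q (Fin.last l)) (by simp [hqlast]) (by simp [hqlast]) (by simp [hqlast]) _
          (hQ _), ← Ideal.map_pow, Ideal.mem_map_C_iff]
    have hi : ∀ i : Fin l, F ∈ P i.castSucc ^ m ↔
        ∀ k, auxLin (q i.castSucc) ^ (m - k) ∣ (ψ F).coeff k := by
      intro i
      rw [← aux_mem_map ψ, Ideal.map_pow, hmapψ,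
        aux_on (q i.castSucc) (hqon i) (hq0 _) _ (hQ _), aux_mem_span_pow]
    constructor
    · intro h k
      refine ⟨?_, hlast.mp (h _) k⟩
      rw [hG, ← Finset.prod_pow]
      refine Finset.prod_dvd_of_isRelPrime ?_ fun i _ => (hi i).mp (h _) k
      intro i _ j _ hij
      exact (hrel i j hij).pow
    · intro h i
      refine Fin.lastCases ?_ (fun i => ?_) i
      · exact hlast.mpr fun k => (h k).2
      · refine (hi i).mpr fun k => dvd_trans ?_ (h k).1
        exact pow_dvd_pow_of_dvd (Finset.dvd_prod_of_mem _ (Finset.mem_univ i)) _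

theorem stmt_10
    (K : Type*) [Field K] [CharZero K]
    -- `l > 2` points on a line plus one point off the line
    (l : ℕ) (hl : 2 < l)
    (p : Fin (l + 1) → Fin 3 → K) (hp0 : ∀ i, p i ≠ 0)
    (hdist : ∀ i j, i ≠ j → ∀ c : K, c • p i ≠ p j)
    (L : Fin 3 → K) (hL : L ≠ 0)
    (hon : ∀ i : Fin (l + 1), (i : ℕ) < l → ∑ j, L j * p i j = 0)
    (hoff : ∑ j, L j * p (Fin.last l) j ≠ 0)
    -- `P i` is the homogeneous prime ideal of all forms vanishing at `p i`
    (P : Fin (l + 1) → Ideal (MvPolynomial (Fin 3) K))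
    (hP : ∀ i F, F ∈ P i ↔ ∀ n, eval (p i) (homogeneousComponent n F) = 0)
    -- the uniform fat point ideal `I^{(m)} = P_1^m ∩ ⋯ ∩ P_{l+1}^m`
    (m : ℕ) (hm : 1 ≤ m) (hdvd : l * (l - 1) ∣ m)
    (Im : Ideal (MvPolynomial (Fin 3) K)) (hIm : Im = ⨅ i, P i ^ m) :
    ∑ᶠ d ∈ Set.Ioi (2 * m), vnum Im d = m - m / (l - 1) := by
  exact aux_sum l m hl hdvd _ fun d hd =>
    aux_main l hl p hp0 hdist L hon hoff P hP m Im hIm d hd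
end

section
/- Suppose m ≥ 1 is an integer divisible by l(l−1). Then the largest degree of a minimal generator of I^{(m)} equals lm: v_{lm}(I^{(m)}) = 1 and v_d(I^{(m)}) = 0 for every degree d > lm. Consequently, along integers m divisible by l(l−1), the ratio (largest degree of a minimal generator of I^{(m)})/m converges to l as m → ∞. (This is the y-intercept of the limiting shape of the symbolic generic initial system of I.) -/
open MvPolynomial Filter

lemma hom_dvd {K σ : Type*} [Field K] {c V : MvPolynomial σ K} {n N : ℕ} (hc : c.IsHomogeneous n)
    (hV : V.IsHomogeneous N) (h : V ∣ c) :
    c = 0 ∨ ∃ e h, N + e = n ∧ h.IsHomogeneous e ∧ c = V * h := by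
  obtain ⟨g, rfl⟩ := h
  by_cases h0 : V * g = 0
  · exact Or.inl h0
  right
  have key : V * g = ∑ j ∈ Finset.range (g.totalDegree + 1),
      if n = N + j then V * homogeneousComponent j g else 0 := by
    conv_lhs => rw [← homogeneousComponent_eq_self hc]
    conv_lhs => rw [← sum_homogeneousComponent g, Finset.mul_sum, map_sum]
    refine Finset.sum_congr rfl fun j _ => ?_
    exact homogeneousComponent_of_mem
      (hV.mul (homogeneousComponent_isHomogeneous j g))
  obtain ⟨j, hj, hj'⟩ := Finset.exists_ne_zero_of_sum_ne_zero (key ▸ h0)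
  have hn : n = N + j := by
    by_contra h
    simp [h] at hj'
  refine ⟨j, homogeneousComponent j g, hn.symm, homogeneousComponent_isHomogeneous j g, ?_⟩
  rw [key, Finset.sum_eq_single_of_mem j hj]
  · simp [hn]
  · intro b _ hb
    rw [if_neg]
    omega

lemma coeff_dvd {A : Type*} [CommRing A] (u : A) (m : ℕ) :
    ∀ F ∈ (Ideal.span {Polynomial.X, Polynomial.C u} : Ideal (Polynomial A)) ^ m,
    ∀ k, u ^ (m - k) ∣ F.coeff k := by
  have hmul : ∀ (m : ℕ) (F : Polynomial A), (∀ k, u ^ (m - k) ∣ F.coeff k) → ∀ a : Polynomial A,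
      ∀ k, u ^ (m - k) ∣ (a * F).coeff k := by
    intro m F hF a k
    rw [Polynomial.coeff_mul]
    refine Finset.dvd_sum fun x hx => ?_
    have hx : x.1 + x.2 = k := by simpa using hx
    exact Dvd.dvd.mul_left ((pow_dvd_pow u (by omega)).trans (hF x.2)) _
  induction m with
  | zero => intro F _ k; simp
  | succ m ih =>
    intro F hF
    rw [pow_succ'] at hF
    refine Submodule.mul_induction_on hF ?_ ?_
    · intro r hr s hs
      obtain ⟨a, b, rfl⟩ := Ideal.mem_span_pair.1 hr
      intro k
      have e : (a * Polynomial.X + b * Polynomial.C u) * s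
          = Polynomial.X * (a * s) + Polynomial.C u * (b * s) := by ring
      rw [e, Polynomial.coeff_add, Polynomial.coeff_C_mul]
      refine dvd_add ?_ ?_
      · cases k with
        | zero => simp
        | succ k =>
          rw [Polynomial.coeff_X_mul]
          have := hmul m s (ih s hs) a k
          rwa [show m + 1 - (k + 1) = m - k by omega]
      · have := hmul m s (ih s hs) b k
        refine (pow_dvd_pow u (show m + 1 - k ≤ (m - k) + 1 by omega)).trans ?_
        rw [pow_succ']
        exact mul_dvd_mul_left u this
    · intro x y hx hy k
      rw [Polynomial.coeff_add]
      exact dvd_add (hx k) (hy k)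

/-- linear forms in two variables -/
noncomputable def lin2 {K : Type*} [Field K] (a b : K) : MvPolynomial (Fin 2) K :=
  C b * X 0 - C a * X 1

lemma lin2_rel {K : Type*} [Field K] (a b a' b' : K) (h : a * b' - a' * b ≠ 0) :
    IsRelPrime (lin2 a b) (lin2 a' b') := by
  intro d h1 h2
  have hC : ∀ f : MvPolynomial (Fin 2) K, d ∣ C (a * b' - a' * b) * f → d ∣ f := by
    intro f hf
    have : f = C (a * b' - a' * b)⁻¹ * (C (a * b' - a' * b) * f) := by
      rw [← mul_assoc, ← C_mul, inv_mul_cancel₀ h, C_1, one_mul]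
    rw [this]
    exact Dvd.dvd.mul_left hf _
  have h0 : d ∣ X 0 := by
    apply hC
    have : C (a * b' - a' * b) * X 0 = C a * lin2 a' b' - C a' * lin2 a b := by
      simp only [lin2, C_sub, C_mul]; ring
    rw [this]
    exact dvd_sub (Dvd.dvd.mul_left h2 _) (Dvd.dvd.mul_left h1 _)
  have h1 : d ∣ X 1 := by
    apply hC
    have : C (a * b' - a' * b) * X 1 = C b * lin2 a' b' - C b' * lin2 a b := by
      simp only [lin2, C_sub, C_mul]; ring
    rw [this]
    exact dvd_sub (Dvd.dvd.mul_left h2 _) (Dvd.dvd.mul_left h1 _)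
  obtain ⟨q, hq⟩ := h0
  rcases (X_prime (R := K) (i := (0 : Fin 2))).irreducible.isUnit_or_isUnit hq with hu | hu
  · exact hu
  · exfalso
    have : (X 0 : MvPolynomial (Fin 2) K) ∣ X 1 := by
      rw [hq]
      exact (hu.mul_right_dvd).2 h1
    rw [X_dvd_X] at this
    exact absurd this (by decide)

lemma minors {K : Type*} [Field K] (p : Fin 3 → K) (hp : p ≠ 0) (Q : Ideal (MvPolynomial (Fin 3) K))
    (hQ : ∀ i j, C (p i) * X j - C (p j) * X i ∈ Q) (n : ℕ) (F : MvPolynomial (Fin 3) K)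
    (hF : F.IsHomogeneous n) (h0 : eval p F = 0) : F ∈ Q := by
  obtain ⟨i, hi⟩ := Function.ne_iff.1 hp
  have hi : p i ≠ 0 := hi
  have hsc : ∀ (S : Type _) [CommRing S] [Algebra K S] (c : S) (v : Fin 3 → S),
      aeval (fun j => c * v j) F = c ^ n * aeval v F := by
    intro S _ _ c v
    rw [aeval_def, aeval_def, eval₂_eq, eval₂_eq, Finset.mul_sum]
    refine Finset.sum_congr rfl fun d hd => ?_
    simp_rw [mul_pow, Finset.prod_mul_distrib, Finset.prod_pow_eq_pow_sum]
    rw [show ∑ i ∈ d.support, d i = n from (hF.degree_eq_sum_deg_support hd).symm]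
    ring
  let q := Ideal.Quotient.mkₐ K Q
  have e1 : q F = aeval (fun j => q (X j)) F := by
    have := aeval_unique q
    exact DFunLike.congr_fun this F
  have e2 : aeval (fun j => q (C (p j))) F = 0 := by
    have h1 : (fun j => q (C (p j))) = fun j => algebraMap K _ (p j) := by
      funext j
      exact q.commutes (p j)
    rw [h1]
    have h2 := aeval_algebraMap_apply (A := K) (MvPolynomial (Fin 3) K ⧸ Q) p F
    have h3 : aeval p F = eval p F := by rw [← coe_aeval_eq_eval]; rfl
    rw [h3, h0, map_zero] at h2
    exact h2
  have e3 : q (C (p i)) ^ n * q F = 0 := by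
    rw [e1, ← hsc]
    have : (fun j => q (C (p i)) * q (X j)) = fun j => q (X i) * q (C (p j)) := by
      funext j
      have := Ideal.Quotient.eq.2 (show C (p i) * X j - X i * C (p j) ∈ Q by
        rw [mul_comm (X i)]; exact hQ i j)
      rw [← map_mul, ← map_mul]
      exact this
    rw [this, hsc, e2, mul_zero]
  have e4 : (C (p i) : MvPolynomial (Fin 3) K) ^ n * F ∈ Q := by
    rw [← Ideal.Quotient.eq_zero_iff_mem]
    rw [← map_pow, ← map_mul] at e3
    exact e3
  have : F = C ((p i)⁻¹) ^ n * (C (p i) ^ n * F) := by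
    rw [← mul_assoc, ← mul_pow, ← C_mul, inv_mul_cancel₀ hi, C_1, one_pow, one_mul]
  rw [this]
  exact Q.mul_mem_left _ e4

structure Setup (K : Type*) [Field K] (l : ℕ) (y : Fin 3 → MvPolynomial (Fin 3) K)
    (φ : MvPolynomial (Fin 3) K →ₐ[K] MvPolynomial (Fin 3) K) (a b : Fin l → K)
    (Q : Fin l → Ideal (MvPolynomial (Fin 3) K)) (Q' : Ideal (MvPolynomial (Fin 3) K)) : Prop where
  hy : ∀ i, (y i).IsHomogeneous 1
  hφ : ∀ F n, F.IsHomogeneous n → (φ F).IsHomogeneous n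
  inv : ∀ F, aeval y (φ F) = F
  inv' : ∀ i, φ (y i) = X i
  hab : ∀ i j, i ≠ j → a i * b j - a j * b i ≠ 0
  y0 : ∀ i, y 0 ∈ Q i
  u : ∀ i, C (b i) * y 1 - C (a i) * y 2 ∈ Q i
  y1 : y 1 ∈ Q'
  y2 : y 2 ∈ Q'
  mapQ : ∀ i F, F ∈ Q i → φ F ∈ Ideal.span {X 0, C (b i) * X 1 - C (a i) * X 2}
  mapQ' : ∀ F, F ∈ Q' → φ F ∈ Ideal.span {X 1, X 2}

noncomputable def UU {K : Type*} [Field K] {l : ℕ} (y : Fin 3 → MvPolynomial (Fin 3) K)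
    (a b : Fin l → K) : MvPolynomial (Fin 3) K := ∏ i, (C (b i) * y 1 - C (a i) * y 2)

noncomputable def WW {K : Type*} [Field K] (y : Fin 3 → MvPolynomial (Fin 3) K) (e : ℕ) :
    Submodule K (MvPolynomial (Fin 3) K) := (Submodule.span K {y 1, y 2}) ^ e

lemma aeval_mem_WW {K : Type*} [Field K] (y : Fin 3 → MvPolynomial (Fin 3) K) (e : ℕ)
    (g : MvPolynomial (Fin 2) K) (hg : g.IsHomogeneous e) : aeval ![y 1, y 2] g ∈ WW y e := by
  have hg' : g ∈ (homogeneousSubmodule (Fin 2) K 1) ^ e := by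
    rw [homogeneousSubmodule_one_pow]; exact hg
  rw [homogeneousSubmodule_one_eq_span_X] at hg'
  have := Submodule.mem_map_of_mem (f := (aeval (R := K) ![y 1, y 2]).toLinearMap) hg'
  rw [Submodule.map_pow, Submodule.map_span] at this
  have hs : Set.image (aeval (R := K) ![y 1, y 2]).toLinearMap (Set.range X) = {y 1, y 2} := by
    ext f
    simp only [Set.mem_insert_iff, Set.mem_singleton_iff, Set.mem_image, Set.mem_range]
    constructor
    · rintro ⟨_, ⟨i, rfl⟩, rfl⟩
      fin_cases i <;> simp
    · rintro (rfl | rfl)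
      · exact ⟨X 0, ⟨0, rfl⟩, by simp⟩
      · exact ⟨X 1, ⟨1, rfl⟩, by simp⟩
  rw [hs] at this
  exact this

lemma map_pow_mem {A B : Type*} [CommRing A] [CommRing B] (f : A →+* B) (I : Ideal A) (J : Ideal B)
    (h : ∀ F ∈ I, f F ∈ J) (m : ℕ) (F : A) (hF : F ∈ I ^ m) : f F ∈ J ^ m := by
  have h1 : I.map f ≤ J := Ideal.map_le_iff_le_comap.2 h
  have h2 := Ideal.mem_map_of_mem f hF
  rw [Ideal.map_pow] at h2
  exact Ideal.pow_right_mono h1 m h2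

lemma finSucc_sum {K : Type*} [Field K] (y : Fin 3 → MvPolynomial (Fin 3) K)
    (F : MvPolynomial (Fin 3) K) (d : ℕ) (hd : ∀ k, d < k → (finSuccEquiv K 2 F).coeff k = 0) :
    aeval y F = ∑ k ∈ Finset.range (d + 1),
      y 0 ^ k * aeval ![y 1, y 2] ((finSuccEquiv K 2 F).coeff k) := by
  let θ : Polynomial (MvPolynomial (Fin 2) K) →+* MvPolynomial (Fin 3) K :=
    Polynomial.eval₂RingHom ((aeval (R := K) ![y 1, y 2]) : MvPolynomial (Fin 2) K →+* _) (y 0)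
  have h1 : ∀ F, aeval y F = θ (finSuccEquiv K 2 F) := by
    intro F
    have : ((aeval (R := K) y) : MvPolynomial (Fin 3) K →+* _)
        = θ.comp (finSuccEquiv K 2 : MvPolynomial (Fin 3) K →+* _) := by
      apply MvPolynomial.ringHom_ext
      · intro r
        have : (finSuccEquiv K 2) (C r) = Polynomial.C (C r) := by
          simp [finSuccEquiv_apply]
        simp [θ, this]
      · intro i
        refine Fin.cases ?_ (fun j => ?_) i
        · simp [θ, finSuccEquiv_X_zero]
        · simp only [RingHom.coe_coe, aeval_X, RingHom.comp_apply]
          rw [finSuccEquiv_X_succ]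
          simp only [θ, Polynomial.coe_eval₂RingHom, Polynomial.eval₂_C, RingHom.coe_coe, aeval_X]
          fin_cases j <;> rfl
    exact DFunLike.congr_fun this F
  rw [h1]
  have hdeg : (finSuccEquiv K 2 F).natDegree < d + 1 := by
    rw [Nat.lt_succ_iff, Polynomial.natDegree_le_iff_coeff_eq_zero]
    exact hd
  simp only [θ, Polynomial.coe_eval₂RingHom]
  rw [Polynomial.eval₂_eq_sum_range' _ hdeg]
  refine Finset.sum_congr rfl fun k _ => ?_
  rw [mul_comm]; rfl

lemma struct {K : Type*} [Field K] {l : ℕ} {y : Fin 3 → MvPolynomial (Fin 3) K}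
    {φ : MvPolynomial (Fin 3) K →ₐ[K] MvPolynomial (Fin 3) K} {a b : Fin l → K}
    {Q : Fin l → Ideal (MvPolynomial (Fin 3) K)} {Q' : Ideal (MvPolynomial (Fin 3) K)}
    (S : Setup K l y φ a b Q Q') (m d : ℕ) (F : MvPolynomial (Fin 3) K) (hF : F.IsHomogeneous d)
    (h1 : ∀ i, F ∈ Q i ^ m) (h2 : F ∈ Q' ^ m) :
    ∃ G : ℕ → MvPolynomial (Fin 3) K,
      F = ∑ k ∈ Finset.range (d + 1), y 0 ^ k * (UU y a b ^ (m - k) * G k) ∧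
      ∀ k, G k = 0 ∨ ∃ e, l * (m - k) + k + e = d ∧ m ≤ l * (m - k) + e ∧ G k ∈ WW y e := by
  set f := finSuccEquiv K 2 (φ F) with hf
  have hX1 : finSuccEquiv K 2 (X 1) = Polynomial.C (X 0) := finSuccEquiv_X_succ (j := 0)
  have hX2 : finSuccEquiv K 2 (X 2) = Polynomial.C (X 1) := finSuccEquiv_X_succ (j := 1)
  have hC : ∀ r : K, finSuccEquiv K 2 (C r) = Polynomial.C (C r) := fun r => by
    simp [finSuccEquiv_apply]
  let ε : MvPolynomial (Fin 3) K →+* Polynomial (MvPolynomial (Fin 2) K) :=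
    (finSuccEquiv K 2 : MvPolynomial (Fin 3) K →+* Polynomial (MvPolynomial (Fin 2) K))
  have hφF := S.hφ F d hF
  have hcoef0 : ∀ k, d < k → f.coeff k = 0 := by
    intro k hk
    ext s
    rw [hf, finSuccEquiv_coeff_coeff, coeff_zero]
    apply hφF.coeff_eq_zero
    rw [Finsupp.degree_eq_sum, Fin.sum_univ_succ]
    simp only [Finsupp.cons_zero]
    omega
  have hdvd : ∀ k i, lin2 (a i) (b i) ^ (m - k) ∣ f.coeff k := by
    intro k i
    refine coeff_dvd (lin2 (a i) (b i)) m f ?_ k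
    refine map_pow_mem (ε.comp
      (φ : MvPolynomial (Fin 3) K →+* MvPolynomial (Fin 3) K)) (Q i) _ ?_ m F (h1 i)
    intro F hF
    have := Ideal.mem_map_of_mem ε (S.mapQ i F hF)
    rw [Ideal.map_span, Set.image_pair] at this
    simpa [ε, hX1, hX2, hC, finSuccEquiv_X_zero, lin2] using this
  have hvars : ∀ k, f.coeff k ∈ idealOfVars (Fin 2) K ^ m := by
    have : f ∈ (Ideal.map Polynomial.C (idealOfVars (Fin 2) K)) ^ m := by
      refine map_pow_mem (ε.comp
      (φ : MvPolynomial (Fin 3) K →+* MvPolynomial (Fin 3) K)) Q' _ ?_ m F h2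
      intro F hF
      have := Ideal.mem_map_of_mem ε (S.mapQ' F hF)
      rw [Ideal.map_span, Set.image_pair] at this
      refine (Ideal.span_le.2 ?_) this
      rintro _ (rfl | rfl)
      · change finSuccEquiv K 2 (X 1) ∈ _
        rw [hX1]
        exact Ideal.mem_map_of_mem _ (Ideal.subset_span ⟨0, rfl⟩)
      · change finSuccEquiv K 2 (X 2) ∈ _
        rw [hX2]
        exact Ideal.mem_map_of_mem _ (Ideal.subset_span ⟨1, rfl⟩)
    rw [← Ideal.map_pow] at this
    exact Ideal.mem_map_C_iff.1 this
  let V : MvPolynomial (Fin 2) K := ∏ i, lin2 (a i) (b i)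
  have hV : V.IsHomogeneous l := by
    have := IsHomogeneous.prod Finset.univ (fun i => lin2 (a i) (b i)) (fun _ => 1) (fun i _ => by
      exact (isHomogeneous_C_mul_X _ _).sub (isHomogeneous_C_mul_X _ _))
    simpa using this
  have hUV : aeval ![y 1, y 2] V = UU y a b := by
    simp [V, UU, lin2, map_prod, algebraMap_eq]
  have hVd : ∀ k, V ^ (m - k) ∣ f.coeff k := by
    intro k
    rw [← Finset.prod_pow]
    refine Fintype.prod_dvd_of_isRelPrime ?_ (hdvd k)
    intro i j hij
    exact (lin2_rel _ _ _ _ (S.hab i j hij)).pow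
  have main : ∀ k, ∃ g, f.coeff k = V ^ (m - k) * g ∧ (g = 0 ∨ ∃ e, l * (m - k) + k + e = d ∧
      m ≤ l * (m - k) + e ∧ g.IsHomogeneous e) := by
    intro k
    by_cases h0 : f.coeff k = 0
    · exact ⟨0, by simp [h0], Or.inl rfl⟩
    have hk : k ≤ d := by
      by_contra h
      exact h0 (hcoef0 k (by omega))
    have hh := hφF.finSuccEquiv_coeff_isHomogeneous k (d - k) (by omega)
    rcases hom_dvd hh (hV.pow (m - k)) (hVd k) with h | ⟨e, g, he, hg, hc⟩
    · exact absurd h h0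
    · refine ⟨g, hc, Or.inr ⟨e, by omega, ?_, hg⟩⟩
      obtain ⟨s, hs⟩ := MvPolynomial.ne_zero_iff.1 h0
      have h3 := (mem_pow_idealOfVars_iff m _).1 (hvars k) s (mem_support_iff.2 hs)
      have h4 : s.degree = d - k := by
        by_contra h
        exact hs (hh.coeff_eq_zero h)
      omega
  choose g hg1 hg2 using main
  refine ⟨fun k => aeval ![y 1, y 2] (g k), ?_, fun k => ?_⟩
  · conv_lhs => rw [← S.inv F, finSucc_sum y (φ F) d hcoef0]
    refine Finset.sum_congr rfl fun k _ => ?_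
    rw [← hf, hg1 k, map_mul, map_pow, hUV]
  · rcases hg2 k with h | ⟨e, h1, h2, h3⟩
    · left; simp [h]
    · exact Or.inr ⟨e, h1, h2, aeval_mem_WW y e _ h3⟩

section core
variable {K : Type*} [Field K] {l : ℕ} {y : Fin 3 → MvPolynomial (Fin 3) K}
    {φ : MvPolynomial (Fin 3) K →ₐ[K] MvPolynomial (Fin 3) K} {a b : Fin l → K}
    {Q : Fin l → Ideal (MvPolynomial (Fin 3) K)} {Q' : Ideal (MvPolynomial (Fin 3) K)}

lemma UU_hom (S : Setup K l y φ a b Q Q') : (UU y a b).IsHomogeneous l := by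
  have := IsHomogeneous.prod Finset.univ (fun i => C (b i) * y 1 - C (a i) * y 2) (fun _ => 1)
    (fun i _ => ((S.hy 1).C_mul _).sub ((S.hy 2).C_mul _))
  simpa [UU] using this

lemma span_hom (S : Setup K l y φ a b Q Q') :
    Submodule.span K {y 1, y 2} ≤ homogeneousSubmodule (Fin 3) K 1 := by
  rw [Submodule.span_le]
  rintro _ (rfl | rfl)
  · exact S.hy 1
  · exact S.hy 2

lemma WW_hom (S : Setup K l y φ a b Q Q') {e : ℕ} {g : MvPolynomial (Fin 3) K}
    (hg : g ∈ WW y e) : g.IsHomogeneous e := by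
  have := pow_le_pow_left' (span_hom S) e hg
  rwa [homogeneousSubmodule_one_pow] at this

lemma WW_mem (S : Setup K l y φ a b Q Q') {e : ℕ} : ∀ g ∈ WW y e, g ∈ Q' ^ e := by
  induction e with
  | zero => intro g _; simp
  | succ e ih =>
    intro g hg
    unfold WW at hg
    rw [pow_succ'] at hg ⊢
    refine Submodule.mul_induction_on hg ?_ ?_
    · intro r hr s hs
      refine Ideal.mul_mem_mul ?_ (ih s hs)
      have : Submodule.span K {y 1, y 2} ≤ Q'.restrictScalars K := by
        rw [Submodule.span_le]
        rintro _ (rfl | rfl)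
        · exact S.y1
        · exact S.y2
      exact this hr
    · intro x z hx hz
      exact add_mem hx hz

lemma UU_memQ (S : Setup K l y φ a b Q Q') (i : Fin l) : UU y a b ∈ Q i :=
  Ideal.mem_of_dvd _ (Finset.dvd_prod_of_mem _ (Finset.mem_univ i)) (S.u i)

lemma UU_memQ' (S : Setup K l y φ a b Q Q') : UU y a b ∈ Q' ^ l := by
  have := Ideal.prod_mem_prod (s := Finset.univ) (I := fun _ : Fin l => Q')
    (x := fun i => C (b i) * y 1 - C (a i) * y 2)
    (fun i _ => sub_mem (Q'.mul_mem_left _ S.y1) (Q'.mul_mem_left _ S.y2))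
  simpa [UU] using this

variable {m : ℕ} {J : Ideal (MvPolynomial (Fin 3) K)}

lemma term_mem (S : Setup K l y φ a b Q Q')
    (hJ : ∀ F, F ∈ J ↔ (∀ i, F ∈ Q i ^ m) ∧ F ∈ Q' ^ m) {k e d : ℕ} {g : MvPolynomial (Fin 3) K}
    (hg : g ∈ WW y e) (hd : l * (m - k) + k + e = d) (hm : m ≤ l * (m - k) + e) :
    y 0 ^ k * (UU y a b ^ (m - k) * g) ∈ degComp J d := by
  refine ⟨(hJ _).2 ⟨fun i => ?_, ?_⟩, ?_⟩
  · rw [← mul_assoc]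
    refine Ideal.mul_mem_right _ _ ?_
    have := Ideal.mul_mem_mul (Ideal.pow_mem_pow (S.y0 i) k) (Ideal.pow_mem_pow (UU_memQ S i) (m - k))
    rw [← pow_add] at this
    exact Ideal.pow_le_pow_right (by omega) this
  · refine Ideal.mul_mem_left _ _ ?_
    have := Ideal.mul_mem_mul (Ideal.pow_mem_pow (UU_memQ' S) (m - k)) (WW_mem S g hg)
    rw [← pow_mul, ← pow_add] at this
    exact Ideal.pow_le_pow_right hm this
  · have := ((S.hy 0).pow k).mul (((UU_hom S).pow (m - k)).mul (WW_hom S hg))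
    have h2 : 1 * k + (l * (m - k) + e) = d := by omega
    rw [h2] at this
    exact this

lemma term_oneGen (S : Setup K l y φ a b Q Q')
    (hJ : ∀ F, F ∈ J ↔ (∀ i, F ∈ Q i ^ m) ∧ F ∈ Q' ^ m) (hl : 2 < l) (hm1 : 1 ≤ m)
    {k e d : ℕ} {g : MvPolynomial (Fin 3) K} (hlm : l * m ≤ d) (hk : 1 ≤ k ∨ l * m < d)
    (hg : g ∈ WW y e) (hd : l * (m - k) + k + e = d) (hm : m ≤ l * (m - k) + e) :
    y 0 ^ k * (UU y a b ^ (m - k) * g) ∈ oneGen J d := by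
  by_cases hkm : m < k
  · refine Submodule.subset_span ⟨y 0, S.hy 0, y 0 ^ (k - 1) * (UU y a b ^ (m - (k - 1)) * g),
      ?_, ?_⟩
    · have h0 : m - (k - 1) = m - k := by omega
      exact term_mem S hJ (e := e) hg (by rw [h0]; omega) (by rw [h0]; exact hm)
    · have h0 : m - (k - 1) = m - k := by omega
      rw [h0]
      obtain ⟨k, rfl⟩ : ∃ k', k = k' + 1 := ⟨k - 1, by omega⟩
      simp only [Nat.add_sub_cancel]
      ring
  · obtain ⟨j, rfl⟩ : ∃ j, m = k + j := ⟨m - k, by omega⟩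
    simp only [Nat.add_sub_cancel_left] at *
    have h3 : 3 * k ≤ l * k := Nat.mul_le_mul_right k hl
    have h4 : 3 * j ≤ l * j := Nat.mul_le_mul_right j hl
    rw [mul_add] at hlm hk
    obtain ⟨e, rfl⟩ : ∃ e', e = e' + 1 := ⟨e - 1, by omega⟩
    unfold WW at hg
    rw [pow_succ'] at hg
    refine Submodule.mul_induction_on hg ?_ ?_
    · intro r hr s hs
      refine Submodule.subset_span ⟨r, span_hom S hr, y 0 ^ k * (UU y a b ^ (k + j - k) * s), ?_, ?_⟩
      · refine term_mem S hJ (e := e) hs ?_ ?_ <;> rw [Nat.add_sub_cancel_left] <;> omega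
      · rw [Nat.add_sub_cancel_left]; ring
    · intro x z hx hz
      rw [mul_add, mul_add]
      exact add_mem hx hz

lemma core_zero (S : Setup K l y φ a b Q Q')
    (hJ : ∀ F, F ∈ J ↔ (∀ i, F ∈ Q i ^ m) ∧ F ∈ Q' ^ m) (hl : 2 < l) (hm1 : 1 ≤ m)
    (d : ℕ) (hd : l * m < d) : vnum J d = 0 := by
  have hle : degComp J d ≤ oneGen J d := by
    rintro F ⟨hF, hFd⟩
    obtain ⟨h1, h2⟩ := (hJ F).1 hF
    obtain ⟨G, hG, hG'⟩ := struct S m d F hFd h1 h2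
    rw [hG]
    refine Submodule.sum_mem _ fun k _ => ?_
    rcases hG' k with h | ⟨e, he1, he2, he3⟩
    · simp [h]
    · exact term_oneGen S hJ hl hm1 hd.le (Or.inr hd) he3 he1 he2
  have : Submodule.comap (degComp J d).subtype (oneGen J d) = ⊤ :=
    Submodule.comap_subtype_eq_top.2 hle
  unfold vnum
  have : Subsingleton (↥(degComp J d) ⧸ Submodule.comap (degComp J d).subtype (oneGen J d)) :=
    Submodule.Quotient.subsingleton_iff.2 this
  exact Module.finrank_zero_of_subsingleton

lemma UU_not_dvd (S : Setup K l y φ a b Q Q') (hl : 2 < l) : ¬ y 0 ∣ UU y a b ^ m := by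
  intro h
  have h1 := map_dvd φ h
  rw [map_pow, S.inv'] at h1
  have h2 := X_prime.dvd_of_dvd_pow h1
  rw [UU, map_prod] at h2
  obtain ⟨i, _, q, hq⟩ := (X_prime.dvd_finsetProd_iff _).1 h2
  have hC : ∀ r : K, φ (C r) = C r := fun r => φ.commutes r
  simp only [map_sub, map_mul, S.inv', hC] at hq
  have e1 := congrArg (eval ![0, 1, 0]) hq
  have e2 := congrArg (eval ![0, 0, 1]) hq
  simp at e1 e2
  obtain ⟨j, hj⟩ : ∃ j : Fin l, i ≠ j := by
    by_cases h : i = ⟨0, by omega⟩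
    · exact ⟨⟨1, by omega⟩, by rw [h]; simp⟩
    · exact ⟨_, h⟩
  exact S.hab i j hj (by rw [e1, e2]; ring)

lemma core_one (S : Setup K l y φ a b Q Q')
    (hJ : ∀ F, F ∈ J ↔ (∀ i, F ∈ Q i ^ m) ∧ F ∈ Q' ^ m) (hl : 2 < l) (hm1 : 1 ≤ m) :
    vnum J (l * m) = 1 := by
  have hlm : m ≤ l * m := Nat.le_mul_of_pos_left m (by omega)
  have hU : UU y a b ^ m ∈ degComp J (l * m) := by
    have := term_mem (k := 0) (e := 0) (d := l * m) (g := 1) S hJ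
      (by unfold WW; rw [pow_zero]; exact Submodule.one_le.1 le_rfl) (by simp) (by simpa using hlm)
    simpa using this
  have hdiv : oneGen J (l * m) ≤ (Ideal.span {y 0}).restrictScalars K := by
    unfold oneGen
    rw [Submodule.span_le]
    rintro _ ⟨f, -, g, ⟨hg, hgd⟩, rfl⟩
    refine Ideal.mul_mem_left _ _ ?_
    obtain ⟨h1, h2⟩ := (hJ g).1 hg
    obtain ⟨G, hG, hG'⟩ := struct S m _ g hgd h1 h2
    rw [hG]
    refine Submodule.sum_mem _ fun k _ => ?_
    rcases Nat.eq_zero_or_pos k with rfl | hk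
    · rcases hG' 0 with h | ⟨e, he1, he2, he3⟩
      · simp [h]
      · exfalso
        rw [Nat.sub_zero] at he1
        omega
    · exact Ideal.mul_mem_right _ _ (Ideal.pow_mem_of_mem _ (Ideal.mem_span_singleton_self _) k hk)
  refine finrank_eq_one (Submodule.Quotient.mk ⟨_, hU⟩) ?_ ?_
  · rw [Ne, Submodule.Quotient.mk_eq_zero]
    intro h
    have h1 : UU y a b ^ m ∈ Ideal.span {y 0} := hdiv h
    exact UU_not_dvd S hl (Ideal.mem_span_singleton.1 h1)
  · intro w
    obtain ⟨⟨F, hFm⟩, rfl⟩ := Submodule.Quotient.mk_surjective _ w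
    obtain ⟨hF, hFd⟩ := id hFm
    obtain ⟨h1, h2⟩ := (hJ F).1 hF
    obtain ⟨G, hG, hG'⟩ := struct S m _ F hFd h1 h2
    have hG0 : ∃ c : K, G 0 = C c := by
      rcases hG' 0 with h | ⟨e, he1, he2, he3⟩
      · exact ⟨0, by simp [h]⟩
      · rw [Nat.sub_zero] at he1
        obtain rfl : e = 0 := by omega
        unfold WW at he3
        rw [pow_zero] at he3
        obtain ⟨c, hc⟩ := Submodule.mem_one.1 he3
        exact ⟨c, hc.symm⟩
    obtain ⟨c, hc⟩ := hG0
    refine ⟨c, ?_⟩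
    rw [← Submodule.Quotient.mk_smul, Submodule.Quotient.eq, ← neg_mem_iff]
    change -(c • UU y a b ^ m - F) ∈ oneGen J (l * m)
    have : -(c • UU y a b ^ m - F) = ∑ k ∈ Finset.range (l * m),
        y 0 ^ (k + 1) * (UU y a b ^ (m - (k + 1)) * G (k + 1)) := by
      conv_lhs => rw [hG]
      rw [Finset.sum_range_succ', hc, smul_eq_C_mul]
      simp only [pow_zero, Nat.sub_zero]
      ring
    rw [this]
    refine Submodule.sum_mem _ fun k _ => ?_
    rcases hG' (k + 1) with h | ⟨e, he1, he2, he3⟩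
    · simp [h]
    · exact term_oneGen S hJ hl hm1 le_rfl (Or.inl (by omega)) he3 he1 he2

end core

lemma exists_setup {K : Type*} [Field K] (l : ℕ) (hl : 2 < l)
    (p : Fin (l + 1) → Fin 3 → K) (hp0 : ∀ i, p i ≠ 0)
    (hdist : ∀ i j, i ≠ j → ∀ c : K, c • p i ≠ p j)
    (L : Fin 3 → K)
    (hon : ∀ i : Fin (l + 1), (i : ℕ) < l → ∑ j, L j * p i j = 0)
    (hoff : ∑ j, L j * p (Fin.last l) j ≠ 0)
    (P : Fin (l + 1) → Ideal (MvPolynomial (Fin 3) K))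
    (hP : ∀ i F, F ∈ P i ↔ ∀ n, eval (p i) (homogeneousComponent n F) = 0) :
    ∃ y φ a b, Setup K l y φ a b (fun i => P i.castSucc) (P (Fin.last l)) := by
  let i0 : Fin (l + 1) := ⟨0, by omega⟩
  let i1 : Fin (l + 1) := ⟨1, by omega⟩
  have h01 : i0 ≠ i1 := by simp [i0, i1]
  let E : Matrix (Fin 3) (Fin 3) K := ![p (Fin.last l), p i0, p i1]
  have hLlin : ∀ v w : Fin 3 → K, ∀ c : K,
      ∑ j, L j * (v j + c * w j) = ∑ j, L j * v j + c * ∑ j, L j * w j := by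
    intro v w c
    rw [Finset.mul_sum, ← Finset.sum_add_distrib]
    exact Finset.sum_congr rfl fun j _ => by ring
  have hvE : ∀ c : Fin 3 → K, ∀ j, (Matrix.vecMul c E) j =
      c 0 * p (Fin.last l) j + c 1 * p i0 j + c 2 * p i1 j := by
    intro c j
    simp [Matrix.vecMul, dotProduct, Fin.sum_univ_three, E]
  have hLv : ∀ c : Fin 3 → K, ∑ j, L j * (Matrix.vecMul c E) j =
      c 0 * ∑ j, L j * p (Fin.last l) j := by
    intro c
    have e0 := hon i0 (by simp [i0]; omega)
    have e1 := hon i1 (by simp [i1]; omega)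
    have : ∑ j, L j * (Matrix.vecMul c E) j = c 0 * ∑ j, L j * p (Fin.last l) j
        + c 1 * ∑ j, L j * p i0 j + c 2 * ∑ j, L j * p i1 j := by
      rw [Finset.mul_sum, Finset.mul_sum, Finset.mul_sum, ← Finset.sum_add_distrib,
        ← Finset.sum_add_distrib]
      exact Finset.sum_congr rfl fun j _ => by rw [hvE]; ring
    rw [this, e0, e1]; ring
  have hdet : IsUnit E.det := by
    rw [isUnit_iff_ne_zero]
    intro h0
    obtain ⟨c, hc0, hc⟩ := Matrix.exists_vecMul_eq_zero_iff.2 h0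
    have k0 : c 0 = 0 := by
      have := hLv c
      rw [hc] at this
      simp only [Pi.zero_apply, mul_zero, Finset.sum_const_zero] at this
      exact (mul_eq_zero.1 this.symm).resolve_right hoff
    have hj : ∀ j, c 1 * p i0 j + c 2 * p i1 j = 0 := by
      intro j
      have := hvE c j
      rw [hc, k0] at this
      simpa using this.symm
    have k2 : c 2 = 0 := by
      by_contra h2
      refine hdist i0 i1 h01 (-(c 1) / c 2) ?_
      funext j
      have := hj j
      simp only [Pi.smul_apply, smul_eq_mul]
      field_simp
      linear_combination -this
    have k1 : c 1 = 0 := by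
      by_contra h1
      refine hp0 i0 ?_
      funext j
      have := hj j
      rw [k2, zero_mul, add_zero] at this
      exact (mul_eq_zero.1 this).resolve_left h1
    apply hc0
    funext j
    fin_cases j <;> assumption
  have hEi : E * E⁻¹ = 1 := Matrix.mul_nonsing_inv E hdet
  have hiE : E⁻¹ * E = 1 := Matrix.nonsing_inv_mul E hdet
  let y : Fin 3 → MvPolynomial (Fin 3) K := fun i => ∑ k, C (E⁻¹ k i) * X k
  let φ : MvPolynomial (Fin 3) K →ₐ[K] MvPolynomial (Fin 3) K :=
    aeval (fun j => ∑ i, C (E i j) * X i)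
  let co : Fin (l + 1) → Fin 3 → K := fun i => Matrix.vecMul (p i) E⁻¹
  have hco : ∀ i, Matrix.vecMul (co i) E = p i := by
    intro i
    simp only [co, Matrix.vecMul_vecMul, hiE, Matrix.vecMul_one]
  have hco0 : ∀ i : Fin l, co i.castSucc 0 = 0 := by
    intro i
    have := hLv (co i.castSucc)
    rw [hco, hon _ (by simp)] at this
    exact (mul_eq_zero.1 this.symm).resolve_right hoff
  have hcoL : co (Fin.last l) = ![1, 0, 0] := by
    have e1 : p (Fin.last l) = Matrix.vecMul ![1, 0, 0] E := by
      funext j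
      rw [hvE]
      simp
    simp only [co]
    rw [e1, Matrix.vecMul_vecMul, hEi, Matrix.vecMul_one]
  have hyh : ∀ i, (y i).IsHomogeneous 1 := fun i =>
    IsHomogeneous.sum _ _ _ fun k _ => isHomogeneous_C_mul_X _ _
  have hφh : ∀ F n, F.IsHomogeneous n → (φ F).IsHomogeneous n := by
    intro F n hF
    have := hF.aeval (fun j => ∑ i, C (E i j) * X i) (n := 1) (fun j =>
      IsHomogeneous.sum _ _ _ fun k _ => isHomogeneous_C_mul_X _ _)
    rw [one_mul] at this
    exact this
  have hye : ∀ i j, eval (p i) (y j) = co i j := by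
    intro i j
    simp only [y, map_sum, map_mul, eval_C, eval_X, co, Matrix.vecMul, dotProduct]
    exact Finset.sum_congr rfl fun k _ => mul_comm _ _
  have hφe : ∀ i F, eval (co i) (φ F) = eval (p i) F := by
    intro i F
    have : ((eval (co i)).comp (φ : MvPolynomial (Fin 3) K →+* MvPolynomial (Fin 3) K))
        = eval (p i) := by
      apply MvPolynomial.ringHom_ext
      · intro r
        simp [φ]
      · intro j
        simp only [φ, RingHom.comp_apply, RingHom.coe_coe, aeval_X, map_sum, map_mul, eval_C, eval_X]
        conv_rhs => rw [← hco i]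
        simp only [Matrix.vecMul, dotProduct]
        exact Finset.sum_congr rfl fun k _ => mul_comm _ _
    exact DFunLike.congr_fun this F
  have hlinP : ∀ i f, f.IsHomogeneous 1 → eval (p i) f = 0 → f ∈ P i := by
    intro i f hf h0
    rw [hP]
    intro n
    rw [homogeneousComponent_of_mem hf]
    split_ifs
    · exact h0
    · simp
  have hmap : ∀ i F, F ∈ P i → ∀ I : Ideal (MvPolynomial (Fin 3) K),
      (∀ s t, C (co i s) * X t - C (co i t) * X s ∈ I) → φ F ∈ I := by
    intro i F hF I hI
    rw [← sum_homogeneousComponent F, map_sum]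
    refine Submodule.sum_mem _ fun n _ => ?_
    refine minors (co i) ?_ I hI n _ (hφh _ _ (homogeneousComponent_isHomogeneous n F)) ?_
    · intro h
      apply hp0 i
      rw [← hco i, h, Matrix.zero_vecMul]
    · rw [hφe]
      exact (hP i F).1 hF n
  refine ⟨y, φ, fun i => co i.castSucc 1, fun i => co i.castSucc 2, hyh, hφh, ?_, ?_, ?_, ?_, ?_,
    ?_, ?_, ?_, ?_⟩
  · intro F
    have : (aeval (R := K) y).comp φ = AlgHom.id K _ := by
      apply MvPolynomial.algHom_ext
      intro j
      simp only [φ, y, AlgHom.comp_apply, aeval_X, map_sum, map_mul, AlgHom.id_apply, aeval_C,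
        algebraMap_eq, Finset.mul_sum]
      rw [Finset.sum_comm]
      have h1 : ∀ k, ∑ i, C (E i j) * (C (E⁻¹ k i) * X k)
          = C ((E⁻¹ * E) k j) * (X k : MvPolynomial (Fin 3) K) := by
        intro k
        rw [Matrix.mul_apply, map_sum, Finset.sum_mul]
        refine Finset.sum_congr rfl fun i _ => ?_
        rw [C_mul]; ring
      simp only [h1, hiE, Matrix.one_apply]
      simp
    exact DFunLike.congr_fun this F
  · intro i
    simp only [φ, y, aeval_X, map_sum, map_mul, aeval_C, algebraMap_eq, Finset.mul_sum]
    rw [Finset.sum_comm]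
    have h1 : ∀ k, ∑ j, C (E⁻¹ j i) * (C (E k j) * X k)
        = C ((E * E⁻¹) k i) * (X k : MvPolynomial (Fin 3) K) := by
      intro k
      rw [Matrix.mul_apply, map_sum, Finset.sum_mul]
      refine Finset.sum_congr rfl fun i _ => ?_
      rw [C_mul]; ring
    simp only [h1, hEi, Matrix.one_apply]
    simp
  · intro i j hij h
    have key : ∀ t, co i.castSucc t ≠ 0 → (∀ s, co i.castSucc t * co j.castSucc s
        = co j.castSucc t * co i.castSucc s) → False := by
      intro t ht hs
      refine hdist i.castSucc j.castSucc (fun h => hij (Fin.castSucc_injective l h))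
        (co j.castSucc t / co i.castSucc t) ?_
      rw [← hco i.castSucc, ← hco j.castSucc, ← Matrix.smul_vecMul]
      congr 1
      funext s
      have := hs s
      simp only [Pi.smul_apply, smul_eq_mul]
      field_simp
      linear_combination -this
    have hne : co i.castSucc ≠ 0 := by
      intro h
      apply hp0 i.castSucc
      rw [← hco, h, Matrix.zero_vecMul]
    by_cases h1 : co i.castSucc 1 = 0
    · by_cases h2 : co i.castSucc 2 = 0
      · apply hne
        funext s
        fin_cases s
        · exact hco0 i
        · exact h1
        · exact h2
      · refine key 2 h2 fun s => ?_
        fin_cases s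
        · simp [hco0]
        · simp only [Fin.mk_one]; linear_combination -h
        · simp; ring
    · refine key 1 h1 fun s => ?_
      fin_cases s
      · simp [hco0]
      · simp; ring
      · simp only [Fin.reduceFinMk]; linear_combination h
  · intro i
    exact hlinP _ _ (hyh 0) (by rw [hye, hco0])
  · intro i
    refine hlinP _ _ (((hyh 1).C_mul _).sub ((hyh 2).C_mul _)) ?_
    simp only [map_sub, map_mul, eval_C, hye]
    ring
  · exact hlinP _ _ (hyh 1) (by rw [hye, hcoL]; simp)
  · exact hlinP _ _ (hyh 2) (by rw [hye, hcoL]; simp)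
  · intro i F hF
    have hx : X 0 ∈ Ideal.span {(X 0 : MvPolynomial (Fin 3) K),
        C (co i.castSucc 2) * X 1 - C (co i.castSucc 1) * X 2} := Ideal.subset_span (by simp)
    have hu : C (co i.castSucc 2) * X 1 - C (co i.castSucc 1) * X 2 ∈
        Ideal.span {(X 0 : MvPolynomial (Fin 3) K),
        C (co i.castSucc 2) * X 1 - C (co i.castSucc 1) * X 2} := Ideal.subset_span (by simp)
    refine hmap i.castSucc F hF _ fun s t => ?_
    have hu' := neg_mem hu
    rw [neg_sub] at hu'
    fin_cases s <;> fin_cases t <;>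
      simp only [Fin.zero_eta, Fin.mk_one, Fin.reduceFinMk, hco0, C_0, zero_mul, sub_zero, zero_sub,
        sub_self]
    · exact zero_mem _
    · exact neg_mem (Ideal.mul_mem_left _ _ hx)
    · exact neg_mem (Ideal.mul_mem_left _ _ hx)
    · exact Ideal.mul_mem_left _ _ hx
    · exact zero_mem _
    · exact hu'
    · exact Ideal.mul_mem_left _ _ hx
    · exact hu
    · exact zero_mem _
  · intro F hF
    have hx1 : X 1 ∈ Ideal.span {(X 1 : MvPolynomial (Fin 3) K), X 2} :=
      Ideal.subset_span (by simp)
    have hx2 : X 2 ∈ Ideal.span {(X 1 : MvPolynomial (Fin 3) K), X 2} :=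
      Ideal.subset_span (by simp)
    refine hmap _ F hF _ fun s t => ?_
    rw [hcoL]
    fin_cases s <;> fin_cases t <;> simp [hx1, hx2]

theorem stmt_11
    (K : Type*) [Field K] [CharZero K]
    -- `l > 2` points on a line plus one point off the line
    (l : ℕ) (hl : 2 < l)
    (p : Fin (l + 1) → Fin 3 → K) (hp0 : ∀ i, p i ≠ 0)
    (hdist : ∀ i j, i ≠ j → ∀ c : K, c • p i ≠ p j)
    (L : Fin 3 → K) (hL : L ≠ 0)
    (hon : ∀ i : Fin (l + 1), (i : ℕ) < l → ∑ j, L j * p i j = 0)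
    (hoff : ∑ j, L j * p (Fin.last l) j ≠ 0)
    -- `P i` is the homogeneous prime ideal of all forms vanishing at `p i`
    (P : Fin (l + 1) → Ideal (MvPolynomial (Fin 3) K))
    (hP : ∀ i F, F ∈ P i ↔ ∀ n, eval (p i) (homogeneousComponent n F) = 0)
    -- `Jm m = I^{(m)} = P_1^m ∩ ⋯ ∩ P_{l+1}^m`
    (Jm : ℕ → Ideal (MvPolynomial (Fin 3) K)) (hJm : ∀ m, Jm m = ⨅ i, P i ^ m)
    -- `m ≥ 1` divisible by `l(l−1)`
    (m : ℕ) (hm : 1 ≤ m) (hdvd : l * (l - 1) ∣ m) :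
    -- the largest degree of a minimal generator of `I^{(m)}` is `lm`
    vnum (Jm m) (l * m) = 1 ∧
    (∀ d : ℕ, l * m < d → vnum (Jm m) d = 0) ∧
    -- along `m = ρ·l·(l−1)`, (largest degree of a minimal generator of `I^{(m)}`)/m → l
    Tendsto
      (fun ρ : ℕ => ((sSup {d : ℕ | vnum (Jm (ρ * l * (l - 1))) d ≠ 0} : ℕ) : ℝ) / (ρ * l * (l - 1)))
      atTop (nhds (l : ℝ)) := by
  obtain ⟨y, φ, a, b, S⟩ := exists_setup l hl p hp0 hdist L hon hoff P hP
  have hJ : ∀ m F, F ∈ Jm m ↔ (∀ i : Fin l, F ∈ P i.castSucc ^ m) ∧ F ∈ P (Fin.last l) ^ m := by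
    intro m F
    rw [hJm, Submodule.mem_iInf]
    exact Fin.forall_fin_succ'
  refine ⟨core_one S (hJ m) hl hm, core_zero S (hJ m) hl hm, ?_⟩
  refine Tendsto.congr' ?_ tendsto_const_nhds
  filter_upwards [eventually_ge_atTop 1] with ρ hρ
  have hM : 1 ≤ ρ * l * (l - 1) := Nat.mul_pos (Nat.mul_pos hρ (by omega)) (by omega)
  have hs : sSup {d : ℕ | vnum (Jm (ρ * l * (l - 1))) d ≠ 0} = l * (ρ * l * (l - 1)) := by
    apply IsGreatest.csSup_eq
    refine ⟨?_, ?_⟩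
    · rw [Set.mem_ofPred_eq, core_one S (hJ _) hl hM]
      exact one_ne_zero
    · intro d hd
      by_contra h
      exact hd (core_zero S (hJ _) hl hM d (not_le.1 h))
  rw [hs]
  have hc : ((l - 1 : ℕ) : ℝ) = (l : ℝ) - 1 := by
    rw [Nat.cast_sub (by omega)]; simp
  have hM' : ((ρ * l * (l - 1) : ℕ) : ℝ) ≠ 0 := by
    exact_mod_cast (by omega : ρ * l * (l - 1) ≠ 0)
  push_cast [hc] at hM' ⊢
  rw [mul_div_assoc, div_self hM', mul_one]
end
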